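/- arXiv:1411.3537 — 5 statements merged into one kernel-verified Lean document; each statement's English description precedes it below -/
import Mathlib

section
/- For every interesting model (with Φ and Ψ as described, which are then defined), the composition Φ∘Ψ is not the identity map of ℂ(x,y). Consequently the group generated by Φ and Ψ has order at least 4. -/
/- STATEMENT 2: For every interesting model, Φ∘Ψ is not the identity map of ℂ(x,y);
consequently the group generated by Φ and Ψ has order at least 4. -/

noncomputable section

/-- The field ℂ(x,y) of rational functions in two variables over ℂ. -/
abbrev RF : Type := FractionRing (MvPolynomial (Fin 2) ℂ)

/-- The element x of ℂ(x,y). -/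
def Xr : RF := algebraMap (MvPolynomial (Fin 2) ℂ) RF (MvPolynomial.X 0)

/-- The element y of ℂ(x,y). -/
def Yr : RF := algebraMap (MvPolynomial (Fin 2) ℂ) RF (MvPolynomial.X 1)

/-- The constant c in ℂ(x,y). -/
def Cr (c : ℂ) : RF := algebraMap ℂ RF c

/-- A model is interesting if none of the four boundary triples of multiplicities
is the zero triple. -/
def Interesting (a : ℤ → ℤ → ℂ) : Prop :=
  ¬(a 1 (-1) = 0 ∧ a 1 0 = 0 ∧ a 1 1 = 0) ∧
  ¬(a (-1) 1 = 0 ∧ a 0 1 = 0 ∧ a 1 1 = 0) ∧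
  ¬(a (-1) (-1) = 0 ∧ a (-1) 0 = 0 ∧ a (-1) 1 = 0) ∧
  ¬(a (-1) (-1) = 0 ∧ a 0 (-1) = 0 ∧ a 1 (-1) = 0)

open MvPolynomial in
/-- A fraction `v⁻¹ * (N(w) / D(w))` in two distinct variables `v`, `w` of `ℂ(x,y)`, with `N`, `D`
Laurent polynomials supported in degrees `-1, 0, 1` and `D ≠ 0`, is never equal to `v`. -/
lemma inv_mul_div_ne_self {i j : Fin 2} (hij : i ≠ j) {v w : RF}
    (hv : v = algebraMap (MvPolynomial (Fin 2) ℂ) RF (X i))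
    (hw : w = algebraMap (MvPolynomial (Fin 2) ℂ) RF (X j))
    {c₀ c₁ c₂ : ℂ} (d₀ d₁ d₂ : ℂ) (hc : ¬(c₀ = 0 ∧ c₁ = 0 ∧ c₂ = 0)) :
    v⁻¹ * ((Cr d₀ * w⁻¹ + Cr d₁ + Cr d₂ * w) / (Cr c₀ * w⁻¹ + Cr c₁ + Cr c₂ * w)) ≠ v := by
  intro h
  have hinj := IsFractionRing.injective (MvPolynomial (Fin 2) ℂ) RF
  have hCr (c : ℂ) : Cr c = algebraMap (MvPolynomial (Fin 2) ℂ) RF (C c) :=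
    IsScalarTower.algebraMap_apply ℂ (MvPolynomial (Fin 2) ℂ) RF c
  have hv0 : v ≠ 0 := by
    rw [hv]; exact (map_ne_zero_iff _ hinj).2 (X_ne_zero i)
  have hw0 : w ≠ 0 := by
    rw [hw]; exact (map_ne_zero_iff _ hinj).2 (X_ne_zero j)
  have hD : Cr c₀ * w⁻¹ + Cr c₁ + Cr c₂ * w ≠ 0 := by
    intro hD
    rw [hD, div_zero, mul_zero] at h
    exact hv0 h.symm
  have hRF : Cr d₀ + Cr d₁ * w + Cr d₂ * w ^ 2 =
      v ^ 2 * (Cr c₀ + Cr c₁ * w + Cr c₂ * w ^ 2) := by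
    rw [inv_mul_eq_iff_eq_mul₀ hv0, div_eq_iff hD] at h
    linear_combination w * h +
      (v ^ 2 * Cr c₀ - Cr d₀) * mul_inv_cancel₀ hw0
  have hpoly : C d₀ + C d₁ * X j + C d₂ * X j ^ 2 =
      X i ^ 2 * (C c₀ + C c₁ * X j + C c₂ * X j ^ 2) := by
    apply hinj
    simp only [map_add, map_mul, map_pow, ← hCr, ← hv, ← hw]
    exact hRF
  have heval (s t : ℂ) : d₀ + d₁ * t + d₂ * t ^ 2 = s ^ 2 * (c₀ + c₁ * t + c₂ * t ^ 2) := by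
    simpa [hij.symm] using congrArg (eval fun k => if k = i then s else t) hpoly
  have hzero (t : ℂ) : c₀ + c₁ * t + c₂ * t ^ 2 = 0 := by
    linear_combination heval 0 t - heval 1 t
  refine hc ⟨?_, ?_, ?_⟩
  · linear_combination hzero 0
  · linear_combination (hzero 1 - hzero (-1)) / 2
  · linear_combination (hzero 1 + hzero (-1)) / 2 - hzero 0

theorem statement2 (a : ℤ → ℤ → ℂ) (hInt : Interesting a)
    (Φ Ψ : RF ≃ₐ[ℂ] RF)
    (hΦx : Φ Xr = Xr⁻¹ *
      ((Cr (a (-1) (-1)) * Yr⁻¹ + Cr (a (-1) 0) + Cr (a (-1) 1) * Yr) /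
        (Cr (a 1 (-1)) * Yr⁻¹ + Cr (a 1 0) + Cr (a 1 1) * Yr)))
    (hΦy : Φ Yr = Yr)
    (hΨx : Ψ Xr = Xr)
    (hΨy : Ψ Yr = Yr⁻¹ *
      ((Cr (a (-1) (-1)) * Xr⁻¹ + Cr (a 0 (-1)) + Cr (a 1 (-1)) * Xr) /
        (Cr (a (-1) 1) * Xr⁻¹ + Cr (a 0 1) + Cr (a 1 1) * Xr))) :
    (¬ ∀ r : RF, Φ (Ψ r) = r) ∧
      ∃ g : Fin 4 → (RF ≃ₐ[ℂ] RF), Function.Injective g ∧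
        ∀ i, g i ∈ Subgroup.closure {Φ, Ψ} := by
  have hΦ : Φ Xr ≠ Xr := by
    rw [hΦx]
    exact inv_mul_div_ne_self zero_ne_one rfl rfl _ _ _ hInt.1
  have hΨ : Ψ Yr ≠ Yr := by
    rw [hΨy]
    exact inv_mul_div_ne_self one_ne_zero rfl rfl _ _ _ hInt.2.1
  have hΦΨ : Φ (Ψ Xr) ≠ Xr := by rwa [hΨx]
  have hΦ1 : Φ ≠ 1 := fun h => hΦ (by simp [h])
  have hΨ1 : Ψ ≠ 1 := fun h => hΨ (by simp [h])
  have hne : Φ ≠ Ψ := fun h => hΦ (by rw [h, hΨx])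
  have hmul : Φ * Ψ ≠ 1 := fun h => hΦΨ (by rw [← AlgEquiv.mul_apply, h, AlgEquiv.one_apply])
  have hmemΦ : Φ ∈ Subgroup.closure {Φ, Ψ} := Subgroup.subset_closure (by simp)
  have hmemΨ : Ψ ∈ Subgroup.closure {Φ, Ψ} := Subgroup.subset_closure (by simp)
  refine ⟨fun h => hΦΨ (h Xr), ![1, Φ, Ψ, Φ * Ψ], ?_, ?_⟩
  · intro i j hij
    fin_cases i <;> fin_cases j <;>
      simp_all [eq_comm (a := (1 : RF ≃ₐ[ℂ] RF)), eq_comm (a := Ψ) (b := Φ)]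
  · intro i
    fin_cases i
    exacts [one_mem _, hmemΦ, hmemΨ, mul_mem hmemΦ hmemΨ]

end
end

section
/- Let (a_{u,v}) be an interesting model, with Φ and Ψ the associated automorphisms of ℂ(x,y). Then Φ∘Ψ = Ψ∘Φ (equivalently, (Φ∘Ψ)² = id, i.e., the group of the model is the dihedral group D4) if and only if there exists λ ∈ ℂ, λ ≠ 0, such that a_{-1,v} = λ·a_{1,v} for all v ∈ {-1,0,1}, or there exists λ ∈ ℂ, λ ≠ 0, such that a_{u,-1} = λ·a_{u,1} for all u ∈ {-1,0,1}. Equivalently, Φ∘Ψ = Ψ∘Φ holds if and only if either a_{0,1}a_{1,-1} = a_{0,-1}a_{1,1}, a_{-1,1}a_{1,-1} = a_{-1,-1}a_{1,1} and a_{-1,1}a_{0,-1} = a_{-1,-1}a_{0,1} all hold, or a_{1,0}a_{-1,1} = a_{-1,0}a_{1,1}, a_{1,-1}a_{-1,1} = a_{-1,-1}a_{1,1} and a_{1,-1}a_{-1,0} = a_{-1,-1}a_{1,0} all hold. -/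
/- STATEMENT 4: Characterization of the interesting models whose group is D4:
Φ∘Ψ = Ψ∘Φ iff one of the two rows of the step-multiplicity array is a nonzero
multiple of the other (in either orientation), iff the corresponding 2×2 minors vanish. -/

noncomputable section

lemma algHom_apply_Cr (F : RF →ₐ[ℂ] RF) (c : ℂ) : F (Cr c) = Cr c := F.commutes c

lemma Cr_ne_zero {c : ℂ} (hc : c ≠ 0) : Cr c ≠ 0 :=
  (map_ne_zero (algebraMap ℂ RF)).mpr hc

lemma Cr_mul (c d : ℂ) : Cr (c * d) = Cr c * Cr d := map_mul (algebraMap ℂ RF) c d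

lemma Cr_eq_algebraMap_C (c : ℂ) :
    Cr c = algebraMap (MvPolynomial (Fin 2) ℂ) RF (MvPolynomial.C c) :=
  IsScalarTower.algebraMap_apply ℂ (MvPolynomial (Fin 2) ℂ) RF c

lemma Xr_ne_zero : Xr ≠ 0 := by
  simp [Xr, MvPolynomial.X_ne_zero]

lemma Yr_ne_zero : Yr ≠ 0 := by
  simp [Yr, MvPolynomial.X_ne_zero]

/-- A polynomial that vanishes in `ℂ(x,y)` vanishes at every point of `ℂ²`. -/
lemma eval_eq_zero_of_algebraMap_eq_zero {p : MvPolynomial (Fin 2) ℂ}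
    (hp : algebraMap (MvPolynomial (Fin 2) ℂ) RF p = 0) (x y : ℂ) :
    MvPolynomial.eval ![x, y] p = 0 := by
  rw [(map_eq_zero_iff _ (IsFractionRing.injective (MvPolynomial (Fin 2) ℂ) RF)).mp hp, map_zero]

/-- A polynomial function of degree at most two that vanishes everywhere has zero coefficients. -/
lemma coeffs_eq_zero_of_quadratic_eq_zero {c₀ c₁ c₂ : ℂ}
    (h : ∀ t : ℂ, c₀ + c₁ * t + c₂ * t ^ 2 = 0) : c₀ = 0 ∧ c₁ = 0 ∧ c₂ = 0 := by
  have h₀ := h 0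
  have h₁ := h 1
  have h₂ := h (-1)
  refine ⟨?_, ?_, ?_⟩
  · linear_combination h₀
  · linear_combination (h₁ - h₂) / 2
  · linear_combination (h₁ + h₂) / 2 - h₀

lemma laurent_Xr_ne_zero {p q r : ℂ} (h : ¬(p = 0 ∧ q = 0 ∧ r = 0)) :
    Cr p * Xr⁻¹ + Cr q + Cr r * Xr ≠ 0 := by
  intro h0
  have hX := Xr_ne_zero
  have h1 : Cr p + Cr q * Xr + Cr r * Xr ^ 2 = 0 := by
    field_simp at h0
    linear_combination h0
  refine h (coeffs_eq_zero_of_quadratic_eq_zero fun t => ?_)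
  simp only [Cr_eq_algebraMap_C, Xr, ← map_mul, ← map_add, ← map_pow] at h1
  simpa using eval_eq_zero_of_algebraMap_eq_zero h1 t 0

lemma laurent_Yr_ne_zero {p q r : ℂ} (h : ¬(p = 0 ∧ q = 0 ∧ r = 0)) :
    Cr p * Yr⁻¹ + Cr q + Cr r * Yr ≠ 0 := by
  intro h0
  have hY := Yr_ne_zero
  have h1 : Cr p + Cr q * Yr + Cr r * Yr ^ 2 = 0 := by
    field_simp at h0
    linear_combination h0
  refine h (coeffs_eq_zero_of_quadratic_eq_zero fun t => ?_)
  simp only [Cr_eq_algebraMap_C, Yr, ← map_mul, ← map_add, ← map_pow] at h1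
  simpa using eval_eq_zero_of_algebraMap_eq_zero h1 0 t

/-- A `ℂ`-endomorphism of `ℂ(x,y)` is determined by the images of `x` and `y`. -/
lemma algHom_ext_Xr_Yr {F G : RF →ₐ[ℂ] RF} (hx : F Xr = G Xr) (hy : F Yr = G Yr) : F = G := by
  refine IsLocalization.algHom_ext (nonZeroDivisors (MvPolynomial (Fin 2) ℂ)) ?_
  refine MvPolynomial.algHom_ext fun i => ?_
  fin_cases i
  · exact hx
  · exact hy

/-- For involutions `f` and `g` of a monoid, `(f * g) ^ 2 = 1` means that they commute. -/
lemma mul_mul_self_eq_one_iff_commute {M : Type*} [Monoid M] {f g : M}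
    (hf : f * f = 1) (hg : g * g = 1) : f * g * (f * g) = 1 ↔ f * g = g * f := by
  constructor
  · intro h
    calc f * g = f * g * (f * (g * g) * f) := by rw [hg, mul_one, hf, mul_one]
      _ = f * g * (f * g) * (g * f) := by simp only [mul_assoc]
      _ = g * f := by rw [h, one_mul]
  · intro h
    calc f * g * (f * g) = g * f * (f * g) := by rw [h]
      _ = g * (f * f) * g := by simp only [mul_assoc]
      _ = 1 := by rw [hf, mul_one, hg]

/-- Two nonzero triples with vanishing minors are proportional. -/
lemma exists_proportional_of_minors {p q r u v w : ℂ}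
    (h : ¬(p = 0 ∧ q = 0 ∧ r = 0)) (h' : ¬(u = 0 ∧ v = 0 ∧ w = 0))
    (hpq : p * v = q * u) (hpr : p * w = r * u) (hqr : q * w = r * v) :
    ∃ l : ℂ, l ≠ 0 ∧ p = l * u ∧ q = l * v ∧ r = l * w := by
  have key : ∃ l : ℂ, p = l * u ∧ q = l * v ∧ r = l * w := by
    by_cases hu : u = 0
    · by_cases hv : v = 0
      · have hw : w ≠ 0 := fun hw => h' ⟨hu, hv, hw⟩
        refine ⟨r / w, ?_, ?_, ?_⟩ <;> field_simp
        · exact hpr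
        · exact hqr
      · refine ⟨q / v, ?_, ?_, ?_⟩ <;> field_simp
        · exact hpq
        · exact hqr.symm
    · refine ⟨p / u, ?_, ?_, ?_⟩ <;> field_simp
      · exact hpq.symm
      · exact hpr.symm
  obtain ⟨l, hp, hq, hr⟩ := key
  refine ⟨l, ?_, hp, hq, hr⟩
  rintro rfl
  exact h ⟨by simpa using hp, by simpa using hq, by simpa using hr⟩

/-- With `C(x) = c₀ + c₁ x + c₂ x²` and `D(x) = d₀ + d₁ x + d₂ x²`, the hypothesis is the identity
`C(x) D(R/x) = D(x) C(R/x)` for `R = A/B`, cleared of denominators. -/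
lemma coeff_relations {c₀ c₁ c₂ d₀ d₁ d₂ A B : ℂ}
    (h : ∀ x : ℂ, (c₀ + c₁ * x + c₂ * x ^ 2) *
        (d₀ * x ^ 2 * B ^ 2 + d₁ * x * A * B + d₂ * A ^ 2) =
      (d₀ + d₁ * x + d₂ * x ^ 2) *
        (c₀ * x ^ 2 * B ^ 2 + c₁ * x * A * B + c₂ * A ^ 2)) :
    (c₀ * d₂ - d₀ * c₂) * A = 0 ∧
      (c₁ * d₂ - d₁ * c₂) * A + (c₀ * d₁ - d₀ * c₁) * B = 0 := by
  have h₀ := h 0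
  have h₁ := h 1
  have h₂ := h (-1)
  have h₃ := h 2
  have h₄ := h (-2)
  set α := c₁ * d₂ - d₁ * c₂ with hα
  set β := c₀ * d₁ - d₀ * c₁ with hβ
  have hm : (c₀ * d₂ - d₀ * c₂) * A ^ 2 = 0 := by linear_combination h₀
  have hA : (α * A + β * B) * A = 0 := by
    rw [hα, hβ]; linear_combination (8 * (h₁ - h₂) - (h₃ - h₄)) / 12
  have hB : (α * A + β * B) * B = 0 := by
    rw [hα, hβ]; linear_combination (2 * (h₁ - h₂) - (h₃ - h₄)) / 12
  refine ⟨?_, ?_⟩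
  · rcases mul_eq_zero.mp hm with h | h
    · rw [h, zero_mul]
    · rw [pow_eq_zero_iff two_ne_zero |>.mp h, mul_zero]
  · rcases mul_eq_zero.mp hA with h | hA
    · exact h
    · rcases mul_eq_zero.mp hB with h | hB
      · exact h
      · rw [hA, hB, mul_zero, mul_zero, add_zero]

theorem statement4 (a : ℤ → ℤ → ℂ) (hInt : Interesting a)
    (Φ Ψ : RF →ₐ[ℂ] RF)
    (hΦx : Φ Xr = Xr⁻¹ *
      ((Cr (a (-1) (-1)) * Yr⁻¹ + Cr (a (-1) 0) + Cr (a (-1) 1) * Yr) /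
        (Cr (a 1 (-1)) * Yr⁻¹ + Cr (a 1 0) + Cr (a 1 1) * Yr)))
    (hΦy : Φ Yr = Yr)
    (hΨx : Ψ Xr = Xr)
    (hΨy : Ψ Yr = Yr⁻¹ *
      ((Cr (a (-1) (-1)) * Xr⁻¹ + Cr (a 0 (-1)) + Cr (a 1 (-1)) * Xr) /
        (Cr (a (-1) 1) * Xr⁻¹ + Cr (a 0 1) + Cr (a 1 1) * Xr))) :
    ((Φ.comp Ψ).comp (Φ.comp Ψ) = AlgHom.id ℂ RF ↔ Φ.comp Ψ = Ψ.comp Φ) ∧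
    (Φ.comp Ψ = Ψ.comp Φ ↔
      ((∃ l : ℂ, l ≠ 0 ∧ a (-1) (-1) = l * a 1 (-1) ∧ a (-1) 0 = l * a 1 0 ∧
          a (-1) 1 = l * a 1 1) ∨
       (∃ l : ℂ, l ≠ 0 ∧ a (-1) (-1) = l * a (-1) 1 ∧ a 0 (-1) = l * a 0 1 ∧
          a 1 (-1) = l * a 1 1))) ∧
    (Φ.comp Ψ = Ψ.comp Φ ↔
      ((a 0 1 * a 1 (-1) = a 0 (-1) * a 1 1 ∧
        a (-1) 1 * a 1 (-1) = a (-1) (-1) * a 1 1 ∧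
        a (-1) 1 * a 0 (-1) = a (-1) (-1) * a 0 1) ∨
       (a 1 0 * a (-1) 1 = a (-1) 0 * a 1 1 ∧
        a 1 (-1) * a (-1) 1 = a (-1) (-1) * a 1 1 ∧
        a 1 (-1) * a (-1) 0 = a (-1) (-1) * a 1 0))) := by
  obtain ⟨hB, hD, hA, hC⟩ := hInt
  have hX := Xr_ne_zero
  have hY := Yr_ne_zero
  have hBr := laurent_Yr_ne_zero hB
  have hDr := laurent_Xr_ne_zero hD
  have hAr := laurent_Yr_ne_zero hA
  have hCr := laurent_Xr_ne_zero hC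
  have hΦΦ : Φ.comp Φ = AlgHom.id ℂ RF := by
    refine algHom_ext_Xr_Yr ?_ ?_
    · simp only [AlgHom.comp_apply, hΦx, hΦy, map_mul, map_inv₀, map_div₀, map_add,
        algHom_apply_Cr, AlgHom.id_apply]
      generalize Cr (a (-1) (-1)) * Yr⁻¹ + Cr (a (-1) 0) + Cr (a (-1) 1) * Yr = A at *
      generalize Cr (a 1 (-1)) * Yr⁻¹ + Cr (a 1 0) + Cr (a 1 1) * Yr = B at *
      field_simp
    · simp [hΦy]
  have hΨΨ : Ψ.comp Ψ = AlgHom.id ℂ RF := by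
    refine algHom_ext_Xr_Yr ?_ ?_
    · simp [hΨx]
    · simp only [AlgHom.comp_apply, hΨx, hΨy, map_mul, map_inv₀, map_div₀, map_add,
        algHom_apply_Cr, AlgHom.id_apply]
      generalize Cr (a (-1) (-1)) * Xr⁻¹ + Cr (a 0 (-1)) + Cr (a 1 (-1)) * Xr = C at *
      generalize Cr (a (-1) 1) * Xr⁻¹ + Cr (a 0 1) + Cr (a 1 1) * Xr = D at *
      field_simp
  have minors_of_comm : Φ.comp Ψ = Ψ.comp Φ →
      ((a 0 1 * a 1 (-1) = a 0 (-1) * a 1 1 ∧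
        a (-1) 1 * a 1 (-1) = a (-1) (-1) * a 1 1 ∧
        a (-1) 1 * a 0 (-1) = a (-1) (-1) * a 0 1) ∨
       (a 1 0 * a (-1) 1 = a (-1) 0 * a 1 1 ∧
        a 1 (-1) * a (-1) 1 = a (-1) (-1) * a 1 1 ∧
        a 1 (-1) * a (-1) 0 = a (-1) (-1) * a 1 0)) := by
    intro h
    have hy : Φ (Ψ Yr) = Ψ Yr := by
      simpa [hΦy] using DFunLike.congr_fun h Yr
    have hΦD : Cr (a (-1) 1) * (Φ Xr)⁻¹ + Cr (a 0 1) + Cr (a 1 1) * Φ Xr ≠ 0 := by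
      have := (map_ne_zero Φ).mpr hDr
      simpa only [map_add, map_mul, map_inv₀, algHom_apply_Cr] using this
    have hAB : Φ Xr = Xr⁻¹ * ((Cr (a (-1) (-1)) + Cr (a (-1) 0) * Yr + Cr (a (-1) 1) * Yr ^ 2) /
        (Cr (a 1 (-1)) + Cr (a 1 0) * Yr + Cr (a 1 1) * Yr ^ 2)) := by
      rw [hΦx, ← mul_div_mul_right _ _ hY]
      congr 2 <;> field_simp
    have hA' : Cr (a (-1) (-1)) + Cr (a (-1) 0) * Yr + Cr (a (-1) 1) * Yr ^ 2 ≠ 0 := by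
      intro h0
      refine hAr ?_
      field_simp
      linear_combination h0
    have hB' : Cr (a 1 (-1)) + Cr (a 1 0) * Yr + Cr (a 1 1) * Yr ^ 2 ≠ 0 := by
      intro h0
      refine hBr ?_
      field_simp
      linear_combination h0
    have hpoly : (Cr (a (-1) (-1)) + Cr (a 0 (-1)) * Xr + Cr (a 1 (-1)) * Xr ^ 2) *
        (Cr (a (-1) 1) * Xr ^ 2 * (Cr (a 1 (-1)) + Cr (a 1 0) * Yr + Cr (a 1 1) * Yr ^ 2) ^ 2 +
          Cr (a 0 1) * Xr * (Cr (a (-1) (-1)) + Cr (a (-1) 0) * Yr + Cr (a (-1) 1) * Yr ^ 2) *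
            (Cr (a 1 (-1)) + Cr (a 1 0) * Yr + Cr (a 1 1) * Yr ^ 2) +
          Cr (a 1 1) * (Cr (a (-1) (-1)) + Cr (a (-1) 0) * Yr + Cr (a (-1) 1) * Yr ^ 2) ^ 2) -
        (Cr (a (-1) 1) + Cr (a 0 1) * Xr + Cr (a 1 1) * Xr ^ 2) *
        (Cr (a (-1) (-1)) * Xr ^ 2 * (Cr (a 1 (-1)) + Cr (a 1 0) * Yr + Cr (a 1 1) * Yr ^ 2) ^ 2 +
          Cr (a 0 (-1)) * Xr * (Cr (a (-1) (-1)) + Cr (a (-1) 0) * Yr + Cr (a (-1) 1) * Yr ^ 2) *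
            (Cr (a 1 (-1)) + Cr (a 1 0) * Yr + Cr (a 1 1) * Yr ^ 2) +
          Cr (a 1 (-1)) * (Cr (a (-1) (-1)) + Cr (a (-1) 0) * Yr + Cr (a (-1) 1) * Yr ^ 2) ^ 2)
        = 0 := by
      simp only [hΨy, map_mul, map_inv₀, map_div₀, map_add, algHom_apply_Cr, hΦy] at hy
      replace hy := mul_left_cancel₀ (inv_ne_zero hY) hy
      rw [div_eq_div_iff hΦD hDr, hAB] at hy
      generalize Cr (a (-1) (-1)) + Cr (a (-1) 0) * Yr + Cr (a (-1) 1) * Yr ^ 2 = A at *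
      generalize Cr (a 1 (-1)) + Cr (a 1 0) * Yr + Cr (a 1 1) * Yr ^ 2 = B at *
      clear hΦx hΨy hΦD hAB hAr hBr hCr hDr
      field_simp at hy
      linear_combination -hy
    simp only [Cr_eq_algebraMap_C, Xr, Yr, ← map_mul, ← map_add, ← map_pow, ← map_sub] at hpoly
    have hrel := eval_eq_zero_of_algebraMap_eq_zero hpoly
    simp only [map_mul, map_add, map_sub, map_pow, MvPolynomial.eval_C, MvPolynomial.eval_X,
      Matrix.cons_val_zero, Matrix.cons_val_one, sub_eq_zero] at hrel
    have hcoeff := fun y => coeff_relations fun x => hrel x y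
    obtain ⟨hm₀, hm₁, hm₂⟩ := coeffs_eq_zero_of_quadratic_eq_zero
      (c₀ := (a (-1) (-1) * a 1 1 - a (-1) 1 * a 1 (-1)) * a (-1) (-1))
      (c₁ := (a (-1) (-1) * a 1 1 - a (-1) 1 * a 1 (-1)) * a (-1) 0)
      (c₂ := (a (-1) (-1) * a 1 1 - a (-1) 1 * a 1 (-1)) * a (-1) 1)
      fun y => by linear_combination (hcoeff y).1
    have hm : a (-1) (-1) * a 1 1 - a (-1) 1 * a 1 (-1) = 0 := by
      by_contra hne
      exact hA ⟨(mul_eq_zero.mp hm₀).resolve_left hne, (mul_eq_zero.mp hm₁).resolve_left hne,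
        (mul_eq_zero.mp hm₂).resolve_left hne⟩
    set α := a 0 (-1) * a 1 1 - a 0 1 * a 1 (-1) with hα
    set β := a (-1) (-1) * a 0 1 - a (-1) 1 * a 0 (-1) with hβ
    obtain ⟨hl₀, hl₁, hl₂⟩ := coeffs_eq_zero_of_quadratic_eq_zero
      (c₀ := α * a (-1) (-1) + β * a 1 (-1))
      (c₁ := α * a (-1) 0 + β * a 1 0)
      (c₂ := α * a (-1) 1 + β * a 1 1)
      fun y => by linear_combination (hcoeff y).2
    by_cases hαβ : α = 0 ∧ β = 0
    · left
      refine ⟨?_, ?_, ?_⟩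
      · linear_combination hα - hαβ.1
      · linear_combination -hm
      · linear_combination hβ - hαβ.2
    · right
      have cancel : ∀ z : ℂ, α * z = 0 → β * z = 0 → z = 0 := by
        intro z h₁ h₂
        by_contra hz
        exact hαβ ⟨(mul_eq_zero.mp h₁).resolve_right hz, (mul_eq_zero.mp h₂).resolve_right hz⟩
      refine ⟨sub_eq_zero.mp (cancel _ ?_ ?_), by linear_combination -hm,
        sub_eq_zero.mp (cancel _ ?_ ?_)⟩
      · linear_combination a 1 0 * hl₂ - a 1 1 * hl₁
      · linear_combination a (-1) 1 * hl₁ - a (-1) 0 * hl₂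
      · linear_combination a 1 (-1) * hl₁ - a 1 0 * hl₀
      · linear_combination a (-1) 0 * hl₀ - a (-1) (-1) * hl₁
  have comm_of_prop :
      ((∃ l : ℂ, l ≠ 0 ∧ a (-1) (-1) = l * a 1 (-1) ∧ a (-1) 0 = l * a 1 0 ∧
          a (-1) 1 = l * a 1 1) ∨
       (∃ l : ℂ, l ≠ 0 ∧ a (-1) (-1) = l * a (-1) 1 ∧ a 0 (-1) = l * a 0 1 ∧
          a 1 (-1) = l * a 1 1)) → Φ.comp Ψ = Ψ.comp Φ := by
    rintro (⟨l, hl, h₁, h₂, h₃⟩ | ⟨l, hl, h₁, h₂, h₃⟩)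
    · have hl' := Cr_ne_zero hl
      have hx : Φ Xr = Cr l * Xr⁻¹ := by
        rw [hΦx, mul_comm]
        congr 1
        rw [div_eq_iff hBr, h₁, h₂, h₃]
        simp only [Cr_mul]
        ring
      refine algHom_ext_Xr_Yr ?_ ?_
      · simp [hx, hΨx, algHom_apply_Cr]
      · simp only [AlgHom.comp_apply, hΦy, hΨy, map_mul, map_inv₀, map_div₀, map_add,
          algHom_apply_Cr, hx]
        congr 2
        · rw [h₁, Cr_mul]; field_simp; ring
        · rw [h₃, Cr_mul]; field_simp; ring
    · have hl' := Cr_ne_zero hl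
      have hy : Ψ Yr = Cr l * Yr⁻¹ := by
        rw [hΨy, mul_comm]
        congr 1
        rw [div_eq_iff hDr, h₁, h₂, h₃]
        simp only [Cr_mul]
        ring
      refine algHom_ext_Xr_Yr ?_ ?_
      · simp only [AlgHom.comp_apply, hΨx, hΦx, map_mul, map_inv₀, map_div₀, map_add,
          algHom_apply_Cr, hy]
        congr 2
        · rw [h₁, Cr_mul]; field_simp; ring
        · rw [h₃, Cr_mul]; field_simp; ring
      · simp [hy, hΦy, algHom_apply_Cr]
  have prop_of_minors :
      ((a 0 1 * a 1 (-1) = a 0 (-1) * a 1 1 ∧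
        a (-1) 1 * a 1 (-1) = a (-1) (-1) * a 1 1 ∧
        a (-1) 1 * a 0 (-1) = a (-1) (-1) * a 0 1) ∨
       (a 1 0 * a (-1) 1 = a (-1) 0 * a 1 1 ∧
        a 1 (-1) * a (-1) 1 = a (-1) (-1) * a 1 1 ∧
        a 1 (-1) * a (-1) 0 = a (-1) (-1) * a 1 0)) →
      ((∃ l : ℂ, l ≠ 0 ∧ a (-1) (-1) = l * a 1 (-1) ∧ a (-1) 0 = l * a 1 0 ∧
          a (-1) 1 = l * a 1 1) ∨
       (∃ l : ℂ, l ≠ 0 ∧ a (-1) (-1) = l * a (-1) 1 ∧ a 0 (-1) = l * a 0 1 ∧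
          a 1 (-1) = l * a 1 1)) := by
    rintro (⟨h₁, h₂, h₃⟩ | ⟨h₁, h₂, h₃⟩)
    · exact Or.inr (exists_proportional_of_minors hC hD (by linear_combination -h₃)
        (by linear_combination -h₂) (by linear_combination -h₁))
    · exact Or.inl (exists_proportional_of_minors hA hB (by linear_combination -h₃)
        (by linear_combination -h₂) (by linear_combination -h₁))
  exact ⟨mul_mul_self_eq_one_iff_commute hΦΦ hΨΨ,
    ⟨fun h => prop_of_minors (minors_of_comm h), comm_of_prop⟩,
    ⟨minors_of_comm, fun h => comm_of_prop (prop_of_minors h)⟩⟩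

end
end

section
/- Let (a_{u,v}) be an interesting model, with Φ and Ψ the associated automorphisms of ℂ(x,y). Then (Φ∘Ψ)³ = id (equivalently, the group of the model is the dihedral group D6) if and only if the multiplicities satisfy one of the following six systems of equations, or one of these systems after the diagonal reflection a_{u,v} ↦ a_{v,u}: (1a) a_{1,1}=a_{-1,-1}=0 and a_{-1,1}a_{1,-1}=a_{-1,0}a_{1,0}=a_{0,1}a_{0,-1}; (1b) a_{1,-1}=a_{-1,1}=0 and a_{-1,0}a_{1,0}=a_{-1,-1}a_{1,1}=a_{0,-1}a_{0,1}; (2a) a_{1,0}=a_{1,1}=0, a_{0,-1}a_{-1,1}=2a_{0,1}a_{-1,-1}, a_{0,-1}²=4a_{1,-1}a_{-1,-1}, a_{0,-1}a_{0,1}=2a_{-1,1}a_{1,-1}; (2b) a_{1,0}=a_{1,-1}=0, a_{0,1}a_{-1,-1}=2a_{0,-1}a_{-1,1}, a_{0,1}²=4a_{1,1}a_{-1,1}, a_{0,1}a_{0,-1}=2a_{-1,-1}a_{1,1}; (3a) a_{-1,0}=a_{-1,-1}=0, a_{0,1}a_{1,-1}=2a_{0,-1}a_{1,1}, a_{0,1}²=4a_{-1,1}a_{1,1},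 a_{0,1}a_{0,-1}=2a_{1,-1}a_{-1,1}; (3b) a_{-1,0}=a_{-1,1}=0, a_{0,-1}a_{1,1}=2a_{0,1}a_{1,-1}, a_{0,-1}²=4a_{-1,-1}a_{1,-1}, a_{0,-1}a_{0,1}=2a_{1,1}a_{-1,-1}. -/
/- STATEMENT 6: Characterization of the interesting models whose group is D6:
(Φ∘Ψ)³ = id iff the multiplicities satisfy one of the six systems 1a,1b,2a,2b,3a,3b,
or one of these systems after the diagonal reflection a_{u,v} ↦ a_{v,u}. -/

noncomputable section

/-- Family 1a. -/
def Fam1a (b : ℤ → ℤ → ℂ) : Prop :=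
  b 1 1 = 0 ∧ b (-1) (-1) = 0 ∧
  b (-1) 1 * b 1 (-1) = b (-1) 0 * b 1 0 ∧ b (-1) 0 * b 1 0 = b 0 1 * b 0 (-1)

/-- Family 1b. -/
def Fam1b (b : ℤ → ℤ → ℂ) : Prop :=
  b 1 (-1) = 0 ∧ b (-1) 1 = 0 ∧
  b (-1) 0 * b 1 0 = b (-1) (-1) * b 1 1 ∧ b (-1) (-1) * b 1 1 = b 0 (-1) * b 0 1

/-- Family 2a. -/
def Fam2a (b : ℤ → ℤ → ℂ) : Prop :=
  b 1 0 = 0 ∧ b 1 1 = 0 ∧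
  b 0 (-1) * b (-1) 1 = 2 * (b 0 1 * b (-1) (-1)) ∧
  b 0 (-1) ^ 2 = 4 * (b 1 (-1) * b (-1) (-1)) ∧
  b 0 (-1) * b 0 1 = 2 * (b (-1) 1 * b 1 (-1))

/-- Family 2b. -/
def Fam2b (b : ℤ → ℤ → ℂ) : Prop :=
  b 1 0 = 0 ∧ b 1 (-1) = 0 ∧
  b 0 1 * b (-1) (-1) = 2 * (b 0 (-1) * b (-1) 1) ∧
  b 0 1 ^ 2 = 4 * (b 1 1 * b (-1) 1) ∧
  b 0 1 * b 0 (-1) = 2 * (b (-1) (-1) * b 1 1)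

/-- Family 3a. -/
def Fam3a (b : ℤ → ℤ → ℂ) : Prop :=
  b (-1) 0 = 0 ∧ b (-1) (-1) = 0 ∧
  b 0 1 * b 1 (-1) = 2 * (b 0 (-1) * b 1 1) ∧
  b 0 1 ^ 2 = 4 * (b (-1) 1 * b 1 1) ∧
  b 0 1 * b 0 (-1) = 2 * (b 1 (-1) * b (-1) 1)

/-- Family 3b. -/
def Fam3b (b : ℤ → ℤ → ℂ) : Prop :=
  b (-1) 0 = 0 ∧ b (-1) 1 = 0 ∧
  b 0 (-1) * b 1 1 = 2 * (b 0 1 * b 1 (-1)) ∧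
  b 0 (-1) ^ 2 = 4 * (b (-1) (-1) * b 1 (-1)) ∧
  b 0 (-1) * b 0 1 = 2 * (b 1 1 * b (-1) (-1))

/-- The numerator of the first-coordinate involution, homogenized. -/
def numX {K : Type*} [CommRing K] [Algebra ℂ K] (a : ℤ → ℤ → ℂ) (y z : K) : K :=
  algebraMap ℂ K (a (-1) (-1)) * z ^ 2 + algebraMap ℂ K (a (-1) 0) * (y * z) +
    algebraMap ℂ K (a (-1) 1) * y ^ 2

/-- The denominator of the first-coordinate involution, homogenized. -/
def denX {K : Type*} [CommRing K] [Algebra ℂ K] (a : ℤ → ℤ → ℂ) (y z : K) : K :=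
  algebraMap ℂ K (a 1 (-1)) * z ^ 2 + algebraMap ℂ K (a 1 0) * (y * z) +
    algebraMap ℂ K (a 1 1) * y ^ 2

/-- The numerator of the second-coordinate involution, homogenized. -/
def numY {K : Type*} [CommRing K] [Algebra ℂ K] (a : ℤ → ℤ → ℂ) (x w : K) : K :=
  algebraMap ℂ K (a (-1) (-1)) * w ^ 2 + algebraMap ℂ K (a 0 (-1)) * (x * w) +
    algebraMap ℂ K (a 1 (-1)) * x ^ 2

/-- The denominator of the second-coordinate involution, homogenized. -/
def denY {K : Type*} [CommRing K] [Algebra ℂ K] (a : ℤ → ℤ → ℂ) (x w : K) : K :=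
  algebraMap ℂ K (a (-1) 1) * w ^ 2 + algebraMap ℂ K (a 0 1) * (x * w) +
    algebraMap ℂ K (a 1 1) * x ^ 2

/-- The bihomogeneous polynomial identity that expresses `ΦΨΦ x = ΨΦΨ x` at the point
`((x : w), (y : z))`. -/
def Closes {K : Type*} [CommRing K] [Algebra ℂ K] (a : ℤ → ℤ → ℂ) (x w y z : K) : Prop :=
  x ^ 2 * numX a (z * numY a (numX a y z * w) (denX a y z * x))
        (y * denY a (numX a y z * w) (denX a y z * x)) * denX a y z *
      denX a (z * numY a x w) (y * denY a x w) =
    w ^ 2 * numX a y z * numX a (z * numY a x w) (y * denY a x w) *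
      denX a (z * numY a (numX a y z * w) (denX a y z * x))
        (y * denY a (numX a y z * w) (denX a y z * x))

section Maps

variable {K L : Type*} [CommRing K] [Algebra ℂ K] [CommRing L] [Algebra ℂ L]
  (f : K →ₐ[ℂ] L) (a : ℤ → ℤ → ℂ)

lemma map_numX (y z : K) : f (numX a y z) = numX a (f y) (f z) := by simp [numX]

lemma map_denX (y z : K) : f (denX a y z) = denX a (f y) (f z) := by simp [denX]

lemma map_numY (y z : K) : f (numY a y z) = numY a (f y) (f z) := by simp [numY]

lemma map_denY (y z : K) : f (denY a y z) = denY a (f y) (f z) := by simp [denY]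

lemma Closes.map {a : ℤ → ℤ → ℂ} {x w y z : K} (h : Closes a x w y z) :
    Closes a (f x) (f w) (f y) (f z) := by
  have h' := congrArg f h
  unfold Closes
  simpa only [map_mul, map_pow, map_numX, map_denX, map_numY, map_denY] using h'

lemma Closes.of_map {a : ℤ → ℤ → ℂ} {x w y z : K} (hf : Function.Injective f)
    (h : Closes a (f x) (f w) (f y) (f z)) : Closes a x w y z := by
  apply hf
  unfold Closes at h
  simpa only [map_mul, map_pow, map_numX, map_denX, map_numY, map_denY] using h

lemma numX_smul (k y z : K) : numX a (k * y) (k * z) = k ^ 2 * numX a y z := by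
  simp only [numX]; ring

lemma denX_smul (k y z : K) : denX a (k * y) (k * z) = k ^ 2 * denX a y z := by
  simp only [denX]; ring

lemma numY_smul (k y z : K) : numY a (k * y) (k * z) = k ^ 2 * numY a y z := by
  simp only [numY]; ring

lemma denY_smul (k y z : K) : denY a (k * y) (k * z) = k ^ 2 * denY a y z := by
  simp only [denY]; ring

/-- Rescaling the homogeneous coordinates preserves the closing identity. -/
lemma Closes.smul {a : ℤ → ℤ → ℂ} {x w y z : K} (h : Closes a x w y z) (k l : K) :
    Closes a (k * x) (k * w) (l * y) (l * z) := by
  unfold Closes at h ⊢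
  have e1 : l ^ 2 * numX a y z * (k * w) = l ^ 2 * k * (numX a y z * w) := by ring
  have e2 : l ^ 2 * denX a y z * (k * x) = l ^ 2 * k * (denX a y z * x) := by ring
  have e3 : ∀ g c t : K, l * c * (g ^ 2 * t) = l * g ^ 2 * (c * t) := fun g c t => by ring
  rw [numX_smul, denX_smul, e1, e2, numY_smul, denY_smul, numY_smul, denY_smul,
    e3, e3, e3, e3, numX_smul, denX_smul, numX_smul, denX_smul]
  linear_combination (k ^ 2 * l ^ 2 * (l * (l ^ 2 * k) ^ 2) ^ 2 * (l * k ^ 2) ^ 2) * h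

end Maps

/-- Reflection of a model in the vertical axis. -/
def flipX (a : ℤ → ℤ → ℂ) : ℤ → ℤ → ℂ := fun u v => a (-u) v

/-- Reflection of a model in the horizontal axis. -/
def flipY (a : ℤ → ℤ → ℂ) : ℤ → ℤ → ℂ := fun u v => a u (-v)

/-- Reflection of a model in the diagonal. -/
def transp (a : ℤ → ℤ → ℂ) : ℤ → ℤ → ℂ := fun u v => a v u

section Reflections

variable {K : Type*} [CommRing K] [Algebra ℂ K] (a : ℤ → ℤ → ℂ) (y z : K)

lemma numX_flipX : numX (flipX a) y z = denX a y z := by simp [numX, denX, flipX]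

lemma denX_flipX : denX (flipX a) y z = numX a y z := by simp [numX, denX, flipX]

lemma numY_flipX : numY (flipX a) y z = numY a z y := by simp [numY, flipX]; ring

lemma denY_flipX : denY (flipX a) y z = denY a z y := by simp [denY, flipX]; ring

lemma numX_flipY : numX (flipY a) y z = numX a z y := by simp [numX, flipY]; ring

lemma denX_flipY : denX (flipY a) y z = denX a z y := by simp [denX, flipY]; ring

lemma numY_flipY : numY (flipY a) y z = denY a y z := by simp [numY, denY, flipY]

lemma denY_flipY : denY (flipY a) y z = numY a y z := by simp [numY, denY, flipY]

variable {a y z} {x w : K}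

lemma Closes.flipX (h : Closes a x w y z) : Closes (flipX a) w x y z := by
  unfold Closes at h ⊢
  simp only [numX_flipX, denX_flipX, numY_flipX, denY_flipX]
  linear_combination -h

lemma Closes.flipY (h : Closes a x w y z) : Closes (flipY a) x w z y := by
  unfold Closes at h ⊢
  simp only [numX_flipY, denX_flipY, numY_flipY, denY_flipY]
  linear_combination h

end Reflections

lemma interesting_flipX {a : ℤ → ℤ → ℂ} (h : Interesting a) : Interesting (flipX a) := by
  unfold Interesting at *
  simp only [flipX, neg_neg, neg_zero]
  tauto

lemma interesting_flipY {a : ℤ → ℤ → ℂ} (h : Interesting a) : Interesting (flipY a) := by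
  unfold Interesting at *
  simp only [flipY, neg_neg, neg_zero]
  tauto

lemma interesting_transp {a : ℤ → ℤ → ℂ} (h : Interesting a) : Interesting (transp a) := by
  unfold Interesting at *
  simp only [transp]
  tauto

/-- The models in one of the six families, up to diagonal reflection. -/
def InFamily (a : ℤ → ℤ → ℂ) : Prop :=
  Fam1a a ∨ Fam1b a ∨ Fam2a a ∨ Fam2b a ∨ Fam3a a ∨ Fam3b a ∨
    Fam1a (fun u v => a v u) ∨ Fam1b (fun u v => a v u) ∨
    Fam2a (fun u v => a v u) ∨ Fam2b (fun u v => a v u) ∨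
    Fam3a (fun u v => a v u) ∨ Fam3b (fun u v => a v u)

lemma inFamily_transp {a : ℤ → ℤ → ℂ} (h : InFamily (transp a)) : InFamily a := by
  unfold InFamily at *
  simp only [transp] at h
  tauto

lemma fam1b_iff (a : ℤ → ℤ → ℂ) : Fam1b a ↔ Fam1a (flipX a) := by
  simp only [Fam1a, Fam1b, flipX, neg_neg, neg_zero]
  constructor <;> rintro ⟨h1, h2, h3, h4⟩ <;> refine ⟨h2, h1, ?_, ?_⟩ <;> grind

lemma fam2b_iff (a : ℤ → ℤ → ℂ) : Fam2b a ↔ Fam2a (flipY a) := by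
  simp only [Fam2a, Fam2b, flipY, neg_neg, neg_zero]

lemma fam3b_iff (a : ℤ → ℤ → ℂ) : Fam3b a ↔ Fam2a (flipX a) := by
  simp only [Fam2a, Fam3b, flipX, neg_neg, neg_zero]

lemma fam3a_iff (a : ℤ → ℤ → ℂ) : Fam3a a ↔ Fam2a (flipX (flipY a)) := by
  simp only [Fam2a, Fam3a, flipX, flipY, neg_neg, neg_zero]

lemma fam1a_flipXY (a : ℤ → ℤ → ℂ) : Fam1a (flipX (flipY a)) ↔ Fam1a a := by
  simp only [Fam1a, flipX, flipY, neg_neg, neg_zero]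
  constructor <;> rintro ⟨h1, h2, h3, h4⟩ <;> refine ⟨h2, h1, ?_, ?_⟩ <;> grind

lemma flipX_flipX (a : ℤ → ℤ → ℂ) : flipX (flipX a) = a := by
  funext u v; simp [flipX]

lemma flipY_flipY (a : ℤ → ℤ → ℂ) : flipY (flipY a) = a := by
  funext u v; simp [flipY]

lemma flipX_flipY (a : ℤ → ℤ → ℂ) : flipX (flipY a) = flipY (flipX a) := rfl

lemma inFamily_iff (a : ℤ → ℤ → ℂ) : InFamily a ↔
    ∃ b ∈ ({a, transp a} : Set (ℤ → ℤ → ℂ)),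
      ∃ c ∈ ({b, flipX b, flipY b, flipX (flipY b)} : Set (ℤ → ℤ → ℂ)), Fam1a c ∨ Fam2a c := by
  have key : ∀ b, (∃ c ∈ ({b, flipX b, flipY b, flipX (flipY b)} : Set (ℤ → ℤ → ℂ)),
      Fam1a c ∨ Fam2a c) ↔
      Fam1a b ∨ Fam1b b ∨ Fam2a b ∨ Fam2b b ∨ Fam3a b ∨ Fam3b b := by
    intro b
    have h := fam1a_flipXY (flipX b)
    rw [flipX_flipY, flipX_flipX] at h
    simp only [Set.mem_insert_iff, Set.mem_singleton_iff, exists_eq_or_imp, exists_eq_left,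
      fam1b_iff, fam2b_iff, fam3a_iff, fam3b_iff, h, fam1a_flipXY]
    tauto
  simp only [key]
  simp only [Set.mem_insert_iff, Set.mem_singleton_iff, exists_eq_or_imp, exists_eq_left]
  unfold InFamily transp
  tauto

lemma transp_flipX (a : ℤ → ℤ → ℂ) : transp (flipX a) = flipY (transp a) := rfl

lemma transp_flipY (a : ℤ → ℤ → ℂ) : transp (flipY a) = flipX (transp a) := rfl

lemma inFamily_flipX {a : ℤ → ℤ → ℂ} (h : InFamily (flipX a)) : InFamily a := by
  rw [inFamily_iff] at *
  simp only [Set.mem_insert_iff, Set.mem_singleton_iff, exists_eq_or_imp, exists_eq_left,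
    transp_flipX, flipX_flipY, flipX_flipX, flipY_flipY] at *
  tauto

lemma inFamily_flipY {a : ℤ → ℤ → ℂ} (h : InFamily (flipY a)) : InFamily a := by
  rw [inFamily_iff] at *
  simp only [Set.mem_insert_iff, Set.mem_singleton_iff, exists_eq_or_imp, exists_eq_left,
    transp_flipY, flipX_flipY, flipX_flipX, flipY_flipY] at *
  tauto

section Genericity

lemma eq_zero_of_mul_eq_zero_of_finite {g h : ℂ → ℂ} (hh : Continuous h)
    (hg : {x | g x = 0}.Finite) (H : ∀ x, g x * h x = 0) (x : ℂ) : h x = 0 := by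
  have hd : Dense ({x | g x = 0}ᶜ) := hg.countable.dense_compl ℂ
  have : h = fun _ => 0 := Continuous.ext_on hd hh continuous_const fun y hy =>
    (mul_eq_zero.1 (H y)).resolve_left hy
  exact congrFun this x

lemma quadratic_eq_zero {A B C : ℂ} (h : ∀ y : ℂ, A + B * y + C * y ^ 2 = 0) :
    A = 0 ∧ B = 0 ∧ C = 0 := by
  have h0 := h 0
  have h1 := h 1
  have h2 := h (-1)
  refine ⟨by linear_combination h0, by linear_combination (h1 - h2) / 2,
    by linear_combination (h1 + h2) / 2 - h0⟩

lemma finite_quadratic_roots {A B C : ℂ} (h : ¬(A = 0 ∧ B = 0 ∧ C = 0)) :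
    {y : ℂ | A + B * y + C * y ^ 2 = 0}.Finite := by
  have hne : (Polynomial.C A + Polynomial.C B * Polynomial.X +
      Polynomial.C C * Polynomial.X ^ 2 : Polynomial ℂ) ≠ 0 := by
    intro h0
    refine h (quadratic_eq_zero fun y => ?_)
    simpa using congrArg (Polynomial.eval y) h0
  refine (Polynomial.finite_setOfPred_isRoot hne).subset fun y hy => ?_
  simpa [Polynomial.IsRoot] using hy

lemma finite_eq_zero : {y : ℂ | y = 0}.Finite := Set.finite_singleton 0

lemma exists_quadratics_ne_zero {A B C A' B' C' : ℂ} (h : ¬(A = 0 ∧ B = 0 ∧ C = 0))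
    (h' : ¬(A' = 0 ∧ B' = 0 ∧ C' = 0)) :
    ∃ y : ℂ, y ≠ 0 ∧ A + B * y + C * y ^ 2 ≠ 0 ∧ A' + B' * y + C' * y ^ 2 ≠ 0 := by
  obtain ⟨y, hy⟩ := ((finite_eq_zero.union
    (finite_quadratic_roots h)).union (finite_quadratic_roots h')).infinite_compl.nonempty
  simp only [Set.mem_compl_iff, Set.mem_union, Set.mem_ofPred_eq, not_or] at hy
  exact ⟨y, hy.1.1, hy.1.2, hy.2⟩

lemma eq_zero_of_monomial_mul {c : ℂ} {k : ℕ} {h : ℂ → ℂ} (hc : c ≠ 0) (hh : Continuous h)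
    (H : ∀ x, c * x ^ k * h x = 0) (x : ℂ) : h x = 0 := by
  refine eq_zero_of_mul_eq_zero_of_finite hh (finite_eq_zero.subset fun y hy => ?_) H x
  exact eq_zero_of_pow_eq_zero ((mul_eq_zero.1 hy).resolve_left hc)

end Genericity

/-- The closing identity in affine coordinates, with `p` and `r` the numerator and denominator of
the first-coordinate involution. -/
lemma Closes.affine {a : ℤ → ℤ → ℂ} {x y p r : ℂ} (h : Closes a x 1 y 1)
    (hp : a (-1) (-1) + a (-1) 0 * y + a (-1) 1 * y ^ 2 = p)
    (hr : a 1 (-1) + a 1 0 * y + a 1 1 * y ^ 2 = r) :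
    x ^ 2 * numX a (numY a p (r * x)) (y * denY a p (r * x)) * r *
        denX a (numY a x 1) (y * denY a x 1) =
      p * numX a (numY a x 1) (y * denY a x 1) *
        denX a (numY a p (r * x)) (y * denY a p (r * x)) := by
  have e1 : numX a y 1 = p := by simp [numX, ← hp]
  have e2 : denX a y 1 = r := by simp [denX, ← hr]
  simpa only [Closes, e1, e2, one_mul, mul_one, one_pow] using h

/-- A model with order-three composition has a vanishing corner. -/
lemma exists_corner_eq_zero {a : ℤ → ℤ → ℂ} (hI : Interesting a)
    (h : ∀ x w y z : ℂ, Closes a x w y z) :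
    a (-1) (-1) = 0 ∨ a (-1) 1 = 0 ∨ a 1 (-1) = 0 ∨ a 1 1 = 0 := by
  obtain ⟨y, -, hp, hr⟩ := exists_quadratics_ne_zero hI.2.2.1 hI.1
  obtain ⟨p, hp'⟩ : ∃ p, a (-1) (-1) + a (-1) 0 * y + a (-1) 1 * y ^ 2 = p := ⟨_, rfl⟩
  obtain ⟨r, hr'⟩ : ∃ r, a 1 (-1) + a 1 0 * y + a 1 1 * y ^ 2 = r := ⟨_, rfl⟩
  have key := (h 0 1 y 1).affine hp' hr'
  rw [hp'] at hp
  rw [hr'] at hr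
  simp only [numX, denX, numY, denY, Algebra.algebraMap_self, RingHom.id_apply] at key
  have : p ^ 6 * r * (a (-1) (-1) * a (-1) 1 * a 1 (-1) * a 1 1) = 0 := by
    rw [← hr']
    have e : a (-1) 1 * a (-1) (-1) * p = a (-1) 1 * a (-1) (-1) *
      (a (-1) (-1) + a (-1) 0 * y + a (-1) 1 * y ^ 2) := by rw [hp']
    linear_combination -key + p ^ 5 * a 1 (-1) * a 1 1 *
      (a 1 (-1) + a 1 0 * y + a 1 1 * y ^ 2) * e
  simpa [hp, hr, or_assoc] using this

/-- Models without steps `(1,1)` and `(1,0)`. -/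
lemma fam2a_of_closes {a : ℤ → ℤ → ℂ} (hI : Interesting a)
    (h : ∀ x w y z : ℂ, Closes a x w y z) (h11 : a 1 1 = 0) (h10 : a 1 0 = 0) : Fam2a a := by
  obtain ⟨i1, i2, i3, i4⟩ := hI
  have hse : a 1 (-1) ≠ 0 := fun h0 => i1 ⟨h0, h10, h11⟩
  have aff : ∀ x y p : ℂ, a (-1) (-1) + a (-1) 0 * y + a (-1) 1 * y ^ 2 = p → _ :=
    fun x y p hp => (h x 1 y 1).affine hp rfl
  simp only [numX, denX, numY, denY, Algebra.algebraMap_self, RingHom.id_apply, h11, h10] at aff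
  unfold Fam2a
  generalize a (-1) (-1) = sw at *
  generalize a (-1) 0 = w at *
  generalize a (-1) 1 = nw at *
  generalize a 0 (-1) = s at *
  generalize a 0 1 = n at *
  generalize a 1 (-1) = se at *
  refine ⟨h10, h11, ?_⟩
  by_cases hnw : nw = 0
  · subst hnw
    have hn : n ≠ 0 := fun h0 => i2 ⟨rfl, h0, h11⟩
    obtain ⟨y, hy, hp, -⟩ := exists_quadratics_ne_zero i3 i3
    obtain ⟨p, hp'⟩ : ∃ p, sw + w * y + 0 * y ^ 2 = p := ⟨_, rfl⟩
    rw [hp'] at hp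
    have key : ∀ x : ℂ, x ^ 2 * (sw * y * n * p * se * x +
          w * (sw * se ^ 2 * x ^ 2 + s * p * se * x + se * p ^ 2)) -
        p ^ 2 * (sw * y * n * x + w * (sw + s * x + se * x ^ 2)) = 0 := by
      refine eq_zero_of_monomial_mul (c := se ^ 3 * n ^ 3 * y ^ 3 * p) (k := 3) (by simp [*])
        (by fun_prop) fun x => ?_
      linear_combination aff x y p hp'
    have h0 := key 0
    have hwsw : w * sw = 0 := by
      have : p ^ 2 * (w * sw) = 0 := by linear_combination -h0
      simpa [hp] using this
    rcases mul_eq_zero.1 hwsw with hw | hsw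
    · subst hw
      have hsw : sw ≠ 0 := fun h0 => i3 ⟨h0, rfl, rfl⟩
      have := eq_zero_of_monomial_mul (c := sw * y * n * p) (k := 1) (by simp [*])
        (h := fun x => x ^ 2 * se - p) (by fun_prop)
        (fun x => by linear_combination key x) 0
      exact absurd (by linear_combination -this) hp
    · subst hsw
      have hw : w ≠ 0 := fun h0 => i3 ⟨rfl, h0, rfl⟩
      have := eq_zero_of_monomial_mul (c := w * p) (k := 1) (by simp [*])
        (h := fun x => s * (x ^ 2 * se - p)) (by fun_prop)
        (fun x => by linear_combination key x) 0
      have hs : s = 0 := by simpa [hp] using this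
      simp [hs]
  · have key : ∀ y p : ℂ, y ≠ 0 → sw + w * y + nw * y ^ 2 = p → ∀ x : ℂ,
        se * (nw + n * x) ^ 2 * (sw * (y * x * (nw * se * x + n * p)) ^ 2 +
          w * (sw * se * x ^ 2 + s * p * x + p ^ 2) * (y * x * (nw * se * x + n * p)) +
          nw * (sw * se * x ^ 2 + s * p * x + p ^ 2) ^ 2) -
        p * (sw * (y * (nw + n * x)) ^ 2 +
          w * ((sw + s * x + se * x ^ 2) * (y * (nw + n * x))) +
          nw * (sw + s * x + se * x ^ 2) ^ 2) * (nw * se * x + n * p) ^ 2 = 0 := by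
      intro y p hy hp
      refine eq_zero_of_monomial_mul (c := y ^ 2 * se ^ 3) (k := 2) (by simp [*])
        (by fun_prop) fun x => ?_
      linear_combination aff x y p hp
    have hrel : se * nw ^ 2 = sw * n ^ 2 := by
      obtain ⟨y, hy, hp, -⟩ := exists_quadratics_ne_zero i3 i3
      obtain ⟨p, hp'⟩ : ∃ p, sw + w * y + nw * y ^ 2 = p := ⟨_, rfl⟩
      rw [hp'] at hp
      have h0 := key y p hy hp' 0
      have : p ^ 4 * nw * (se * nw ^ 2 - sw * n ^ 2) = 0 := by
        linear_combination h0 + p ^ 3 * n ^ 2 * sw * nw * hp'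
      simpa [hp, hnw, sub_eq_zero] using this
    have hn : n ≠ 0 := by
      rintro rfl
      simp [hse, hnw] at hrel
    obtain ⟨y, hy, hp, hV⟩ := exists_quadratics_ne_zero (A := sw) (B := w) (C := nw)
      (A' := -nw * se * nw + n ^ 2 * sw) (B' := n ^ 2 * w) (C' := n ^ 2 * nw)
      (by simp [hnw]) (by simp [hnw, hn])
    obtain ⟨p, hp'⟩ : ∃ p, sw + w * y + nw * y ^ 2 = p := ⟨_, rfl⟩
    have hV' : n ^ 2 * p - nw ^ 2 * se ≠ 0 := by
      convert hV using 1
      rw [← hp']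
      ring
    rw [hp'] at hp
    have hx : n * (-nw / n) = -nw := by field_simp
    have h0 := key y p hy hp' (-nw / n)
    generalize -nw / n = x at hx h0
    have e1 : nw = -(n * x) := by linear_combination hx
    subst e1
    have hx0 : x ≠ 0 := by
      rintro rfl
      simp at hnw
    have : p * n ^ 3 * x * (sw + s * x + se * x ^ 2) ^ 2 * (p - x ^ 2 * se) ^ 2 = 0 := by
      linear_combination h0
    have hV2 : p - x ^ 2 * se ≠ 0 := by
      intro h0
      apply hV'
      linear_combination n ^ 2 * h0
    have hq : sw + s * x + se * x ^ 2 = 0 := by simpa [hp, hn, hx0, hV2] using this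
    have hsw : sw = se * x ^ 2 := by
      have : n ^ 2 * (sw - se * x ^ 2) = 0 := by linear_combination -hrel
      simpa [hn, sub_eq_zero] using this
    have hs : s = -(2 * se * x) := by
      have : x * (s + 2 * se * x) = 0 := by linear_combination hq - hsw
      have := (mul_eq_zero.1 this).resolve_left hx0
      linear_combination this
    subst hsw hs
    refine ⟨?_, ?_, ?_⟩ <;> ring

/-- Models without steps `(1,1)` and `(-1,-1)`, but with all four edge steps. -/
lemma fam1a_of_closes {a : ℤ → ℤ → ℂ}
    (h : ∀ x w y z : ℂ, Closes a x w y z) (h11 : a 1 1 = 0) (hm : a (-1) (-1) = 0)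
    (he : a 1 0 ≠ 0) (hn : a 0 1 ≠ 0) (hw : a (-1) 0 ≠ 0) (hs : a 0 (-1) ≠ 0) : Fam1a a := by
  have aff : ∀ x y r m : ℂ, a 1 (-1) + a 1 0 * y + a 1 1 * y ^ 2 = r →
      a (-1) 0 + a (-1) 1 * y = m → _ :=
    fun x y r m hr hm' => (h x 1 y 1).affine (p := y * m)
      (by rw [hm, ← hm']; ring) hr
  simp only [numX, denX, numY, denY, Algebra.algebraMap_self, RingHom.id_apply, h11, hm] at aff
  unfold Fam1a
  generalize a (-1) 0 = w at *
  generalize a (-1) 1 = nw at *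
  generalize a 0 (-1) = s at *
  generalize a 0 1 = n at *
  generalize a 1 (-1) = se at *
  generalize a 1 0 = e at *
  refine ⟨h11, hm, ?_⟩
  have key : ∀ y r m : ℂ, y ≠ 0 → m ≠ 0 → r ≠ 0 → se + e * y = r → w + nw * y = m → ∀ x : ℂ,
      (nw + n * x) * (s * r * x + se * (y * m)) *
          (w * (r * x * (nw * r * x + n * (y * m))) + nw * m * (s * r * x + se * (y * m))) *
          (se * y * (nw + n * x) + e * x * (s + se * x)) -
        (s + se * x) * (w * y * (nw + n * x) + nw * x * (s + se * x)) *
          (nw * r * x + n * (y * m)) *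
          (se * (r * x * (nw * r * x + n * (y * m))) + e * m * (s * r * x + se * (y * m))) = 0 := by
    intro y r m hy hm0 hr0 hr hm'
    refine eq_zero_of_monomial_mul (c := y ^ 3 * r * m) (k := 2) (by simp [*])
      (by fun_prop) fun x => ?_
    linear_combination aff x y r m (by rw [← hr]; ring) hm'
  clear aff
  by_cases hnw : nw = 0
  · exfalso
    subst hnw
    obtain ⟨y, hy, hr, -⟩ := exists_quadratics_ne_zero (A := se) (B := e) (C := 0)
      (A' := w) (B' := 0) (C' := 0) (by simp [he]) (by simp [hw])
    obtain ⟨r, hr'⟩ : ∃ r, se + e * y = r := ⟨_, rfl⟩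
    have hr0 : r ≠ 0 := by simpa [hr'] using hr
    have key' : ∀ x : ℂ, x ^ 2 * r * (s * r * x + se * y * w) * (se * y * n + e * (s + se * x)) -
        (s + se * x) * y * w * (se * r * x * n * y + e * (s * r * x + se * y * w)) = 0 := by
      refine eq_zero_of_monomial_mul (c := w ^ 2 * n ^ 2 * y) (k := 1) (by simp [*])
        (by fun_prop) fun x => ?_
      linear_combination key y r w hy hw hr0 hr' (by ring) x
    have hse : se = 0 := by
      simpa [*] using key' 0
    subst hse
    have := eq_zero_of_monomial_mul (c := e * s ^ 2 * r) (k := 1) (by simp [*])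
      (h := fun x => x ^ 2 * r - y * w) (by fun_prop)
      (fun x => by linear_combination key' x) 0
    simp [hy, hw] at this
  by_cases hse : se = 0
  · exfalso
    subst hse
    obtain ⟨y, hy, hm, -⟩ := exists_quadratics_ne_zero (A := w) (B := nw) (C := 0)
      (A' := w) (B' := 0) (C' := 0) (by simp [hw]) (by simp [hw])
    obtain ⟨m, hm'⟩ : ∃ m, w + nw * y = m := ⟨_, rfl⟩
    have hm0 : m ≠ 0 := by simpa [hm'] using hm
    have := eq_zero_of_monomial_mul (c := e ^ 2 * s ^ 2 * y) (k := 1) (by simp [*])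
      (h := fun x => x * (nw + n * x) * (w * (e * y) * x * (nw * (e * y) * x + n * (y * m)) +
          nw * m * s * (e * y) * x) -
        (w * y * (nw + n * x) + nw * x * s) * (nw * (e * y) * x + n * (y * m)) * m) (by fun_prop)
      (fun x => by
        linear_combination key y (e * y) m hy hm0 (by simp [*]) (by ring) hm' x) 0
    simp [*] at this
  have hprod : (nw * se) ^ 2 = w * e * (n * s) := by
    obtain ⟨y, hy, hm, hr⟩ := exists_quadratics_ne_zero (A := w) (B := nw) (C := 0)
      (A' := se) (B' := e) (C' := 0) (by simp [hw]) (by simp [he])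
    obtain ⟨m, hm'⟩ : ∃ m, w + nw * y = m := ⟨_, rfl⟩
    obtain ⟨r, hr'⟩ : ∃ r, se + e * y = r := ⟨_, rfl⟩
    have hm0 : m ≠ 0 := by simpa [hm'] using hm
    have hr0 : r ≠ 0 := by simpa [hr'] using hr
    have : y ^ 3 * m ^ 3 * nw * se * ((nw * se) ^ 2 - w * e * (n * s)) = 0 := by
      linear_combination key y r m hy hm0 hr0 hr' hm' 0
    exact sub_eq_zero.1 ((mul_eq_zero.1 this).resolve_left (by simp [hy, hm0, hnw, hse]))
  have hx : n * (-nw / n) = -nw := by field_simp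
  generalize -nw / n = x at hx
  have e1 : nw = -(n * x) := by linear_combination hx
  subst e1
  have hx0 : x ≠ 0 := by
    rintro rfl
    simp at hnw
  by_cases hq : s + se * x = 0
  · have e2 : s = -(se * x) := by linear_combination hq
    subst e2
    have : n * x * se * (n * x * se + w * e) = 0 := by linear_combination hprod
    have := (mul_eq_zero.1 this).resolve_left (by simp [hn, hx0, hse])
    exact ⟨by linear_combination -this, by linear_combination this⟩
  · have hfin : {y : ℂ | y * (w + -(n * x) * y) * (se + e * y) = 0}.Finite := by
      refine ((finite_eq_zero.union (finite_quadratic_roots (A := w) (B := -(n * x)) (C := 0)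
        (by simp [hw]))).union (finite_quadratic_roots (A := se) (B := e) (C := 0)
        (by simp [he]))).subset fun y hy => ?_
      simpa using hy
    have hroot := eq_zero_of_mul_eq_zero_of_finite
      (g := fun y => y * (w + -(n * x) * y) * (se + e * y))
      (h := fun y => (-(n * x) * (se + e * y) * x + n * (y * (w + -(n * x) * y))) *
        (se * ((se + e * y) * x * (-(n * x) * (se + e * y) * x + n * (y * (w + -(n * x) * y)))) +
          e * (w + -(n * x) * y) * (s * (se + e * y) * x + se * (y * (w + -(n * x) * y)))))
      (by fun_prop) hfin (fun y => by
        by_cases hg : y * (w + -(n * x) * y) * (se + e * y) = 0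
        · simp only [hg, zero_mul]
        · have hg' := hg
          simp only [mul_eq_zero, not_or] at hg'
          have hk := key y _ _ hg'.1.1 hg'.1.2 hg'.2 rfl rfl x
          refine mul_eq_zero_of_right _ ?_
          generalize se + e * y = r at *
          generalize w + -(n * x) * y = m at *
          have : n * x ^ 2 * (s + se * x) ^ 2 * ((-(n * x) * r * x + n * (y * m)) *
            (se * (r * x * (-(n * x) * r * x + n * (y * m))) +
              e * m * (s * r * x + se * (y * m)))) = 0 := by
            linear_combination hk
          exact (mul_eq_zero.1 this).resolve_left (by simp [*])) (-se / e)
    have hy : e * (-se / e) = -se := by field_simp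
    have hy0 : -se / e ≠ 0 := div_ne_zero (neg_ne_zero.2 hse) he
    generalize -se / e = y at hy hy0 hroot
    have e2 : se = -(e * y) := by linear_combination hy
    subst e2
    have : n * e ^ 2 * y ^ 3 * (w + -(n * x) * y) ^ 3 = 0 := by linear_combination -hroot
    have hwm : w + -(n * x) * y = 0 := by
      simpa only [mul_eq_zero, pow_eq_zero_iff, ne_eq, hn, he, hy0, OfNat.ofNat_ne_zero,
        not_false_eq_true, false_or] using this
    have e3 : w = n * x * y := by linear_combination hwm
    subst e3
    have : n * (n * x * y * e) * (s - e * x * y) = 0 := by linear_combination -hprod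
    have := (mul_eq_zero.1 this).resolve_left (by simp [hn, hx0, hy0, he])
    exact ⟨by ring, by linear_combination -n * this⟩

/-- Models without steps `(1,1)` and `(-1,1)`. -/
lemma fam1b_of_closes {a : ℤ → ℤ → ℂ} (h : ∀ x w y z : ℂ, Closes a x w y z)
    (h11 : a 1 1 = 0) (hnw : a (-1) 1 = 0)
    (he : a 1 0 ≠ 0) (hn : a 0 1 ≠ 0) (hsw : a (-1) (-1) ≠ 0) : Fam1b a := by
  have aff : ∀ x y p r : ℂ, a (-1) (-1) + a (-1) 0 * y + a (-1) 1 * y ^ 2 = p →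
      a 1 (-1) + a 1 0 * y + a 1 1 * y ^ 2 = r → _ :=
    fun x y p r hp hr => (h x 1 y 1).affine hp hr
  simp only [numX, denX, numY, denY, Algebra.algebraMap_self, RingHom.id_apply, h11, hnw] at aff
  unfold Fam1b
  generalize a (-1) (-1) = sw at *
  generalize a (-1) 0 = w at *
  generalize a 0 (-1) = s at *
  generalize a 0 1 = n at *
  generalize a 1 (-1) = se at *
  generalize a 1 0 = e at *
  rw [h11, hnw]
  obtain ⟨y, hy, hp, hr⟩ := exists_quadratics_ne_zero (A := sw) (B := w) (C := 0)
      (A' := se) (B' := e) (C' := 0) (by simp [hsw]) (by simp [he])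
  obtain ⟨p, hp'⟩ : ∃ p, sw + w * y = p := ⟨_, rfl⟩
  obtain ⟨r, hr'⟩ : ∃ r, se + e * y = r := ⟨_, rfl⟩
  have hp0 : p ≠ 0 := by simpa [hp'] using hp
  have hr0 : r ≠ 0 := by simpa [hr'] using hr
  have key : ∀ x : ℂ, x ^ 2 * r * (sw * y * r * x * n * p +
          w * (sw * r ^ 2 * x ^ 2 + s * p * r * x + se * p ^ 2)) *
          (se * y * n * x + e * (sw + s * x + se * x ^ 2)) -
        p * (sw * y * n * x + w * (sw + s * x + se * x ^ 2)) *
          (se * y * r * x * n * p + e * (sw * r ^ 2 * x ^ 2 + s * p * r * x + se * p ^ 2)) = 0 := by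
    refine eq_zero_of_monomial_mul (c := y ^ 2 * n ^ 2 * p * r) (k := 2) (by simp [*])
      (by fun_prop) fun x => ?_
    linear_combination aff x y p r (by rw [← hp']; ring) (by rw [← hr']; ring)
  clear aff
  have hwse : w = 0 ∨ se = 0 := by simpa [*, or_comm] using key 0
  rcases hwse with hw | hse
  · subst hw
    have e1 : sw = p := by linear_combination hp'
    subst e1
    have key' : ∀ x : ℂ, x ^ 2 * r ^ 2 * (se * y * n * x + e * (sw + s * x + se * x ^ 2)) -
        (se * y * r * x * n * sw +
          e * (sw * r ^ 2 * x ^ 2 + s * sw * r * x + se * sw ^ 2)) = 0 := by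
      refine eq_zero_of_monomial_mul (c := sw ^ 2 * y * n) (k := 1) (by simp [*])
        (by fun_prop) fun x => ?_
      linear_combination key x
    have hse : se = 0 := by simpa [*] using key' 0
    subst hse
    have := eq_zero_of_monomial_mul (c := e * r) (k := 1) (by simp [*])
      (h := fun x => x ^ 2 * r * s - s * sw) (by fun_prop)
      (fun x => by linear_combination key' x) 0
    have hs : s = 0 := by simpa [*] using this
    simp [hs]
  · subst hse
    have e1 : e * y = r := by linear_combination hr'
    subst e1
    have key' : ∀ x : ℂ, x ^ 2 * e * y * (sw * y * n * p + w * (sw * (e * y) * x + s * p)) *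
          (sw + s * x) -
        p * (sw * y * n * x + w * (sw + s * x)) * (sw * (e * y) * x + s * p) = 0 := by
      refine eq_zero_of_monomial_mul (c := e ^ 2 * y) (k := 1) (by simp [*])
        (by fun_prop) fun x => ?_
      linear_combination key x
    have hws : w = 0 ∨ s = 0 := by simpa [*] using key' 0
    have hw : w = 0 := by
      by_contra hw
      have hs := hws.resolve_left hw
      subst hs
      have := eq_zero_of_monomial_mul (c := sw ^ 2 * e * y) (k := 1) (by simp [*])
        (h := fun x => x * (y * n * p + w * (e * y) * x) - p * (y * n * x + w)) (by fun_prop)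
        (fun x => by linear_combination key' x) 0
      simp [*] at this
    subst hw
    have e1 : sw = p := by linear_combination hp'
    subst e1
    have := eq_zero_of_monomial_mul (c := sw ^ 2 * y * n) (k := 1) (by simp [*])
      (h := fun x => x * (e * y) * (sw + s * x) - (sw * (e * y) * x + s * sw)) (by fun_prop)
      (fun x => by linear_combination key' x) 0
    have hs : s = 0 := by simpa [*] using this
    simp [hs]

/-- Models without the step `(1,1)`: one further multiplicity vanishes. -/
lemma exists_eq_zero_of_northeast_eq_zero {a : ℤ → ℤ → ℂ} (hI : Interesting a)
    (h : ∀ x w y z : ℂ, Closes a x w y z) (h11 : a 1 1 = 0) :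
    a 1 0 = 0 ∨ a 0 1 = 0 ∨ a (-1) (-1) = 0 ∨ a (-1) 1 = 0 ∨ a 1 (-1) = 0 := by
  obtain ⟨y, hy, hp, hr⟩ := exists_quadratics_ne_zero hI.2.2.1 hI.1
  obtain ⟨p, hp'⟩ : ∃ p, a (-1) (-1) + a (-1) 0 * y + a (-1) 1 * y ^ 2 = p := ⟨_, rfl⟩
  obtain ⟨r, hr'⟩ : ∃ r, a 1 (-1) + a 1 0 * y + a 1 1 * y ^ 2 = r := ⟨_, rfl⟩
  have aff : ∀ x : ℂ, _ := fun x => (h x 1 y 1).affine hp' hr'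
  rw [hp'] at hp
  rw [hr'] at hr
  simp only [numX, denX, numY, denY, Algebra.algebraMap_self, RingHom.id_apply, h11] at aff
  generalize a (-1) (-1) = sw at *
  generalize a (-1) 0 = w at *
  generalize a (-1) 1 = nw at *
  generalize a 0 (-1) = s at *
  generalize a 0 1 = n at *
  generalize a 1 (-1) = se at *
  generalize a 1 0 = e at *
  have key := eq_zero_of_monomial_mul (c := y * r) (k := 1) (by simp [*])
    (h := fun x => x * (nw + n * x) *
        (sw * (y * (r * x * (nw * r * x + n * p))) ^ 2 +
          w * ((sw * (r * x) ^ 2 + s * (p * (r * x)) + se * p ^ 2) *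
            (y * (r * x * (nw * r * x + n * p)))) +
          nw * (sw * (r * x) ^ 2 + s * (p * (r * x)) + se * p ^ 2) ^ 2) *
        (se * y * (nw + n * x) + e * (sw + s * x + se * x ^ 2)) -
      p * (sw * (y * (nw + n * x)) ^ 2 + w * ((sw + s * x + se * x ^ 2) * (y * (nw + n * x))) +
          nw * (sw + s * x + se * x ^ 2) ^ 2) * (nw * r * x + n * p) *
        (se * y * (r * x * (nw * r * x + n * p)) +
          e * (sw * (r * x) ^ 2 + s * (p * (r * x)) + se * p ^ 2)))
    (by fun_prop) (fun x => by linear_combination aff x) 0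
  have : p ^ 5 * (e * n * sw * nw * se) = 0 := by
    linear_combination -key - p ^ 4 * (e * n * sw * nw * se) * hp'
  simpa [hp, or_assoc] using this

lemma inFamily_of_northeast_eq_zero {a : ℤ → ℤ → ℂ} (hI : Interesting a)
    (h : ∀ x w y z : ℂ, Closes a x w y z) (h' : ∀ x w y z : ℂ, Closes (transp a) x w y z)
    (h11 : a 1 1 = 0) : InFamily a := by
  by_cases he : a 1 0 = 0
  · exact Or.inr (Or.inr (Or.inl (fam2a_of_closes hI h h11 he)))
  by_cases hn : a 0 1 = 0
  · exact inFamily_transp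
      (Or.inr (Or.inr (Or.inl (fam2a_of_closes (interesting_transp hI) h' h11 hn))))
  by_cases hsw : a (-1) (-1) = 0
  · by_cases hw : a (-1) 0 = 0
    · exact inFamily_flipY (inFamily_flipX (Or.inr (Or.inr (Or.inl (fam2a_of_closes
        (interesting_flipX (interesting_flipY hI)) (fun x w y z => (h w x z y).flipY.flipX)
        hsw hw)))))
    by_cases hs : a 0 (-1) = 0
    · exact inFamily_transp (inFamily_flipY (inFamily_flipX (Or.inr (Or.inr (Or.inl
        (fam2a_of_closes (interesting_flipX (interesting_flipY (interesting_transp hI)))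
          (fun x w y z => (h' w x z y).flipY.flipX) hsw hs))))))
    exact Or.inl (fam1a_of_closes h h11 hsw he hn hw hs)
  by_cases hnw : a (-1) 1 = 0
  · exact Or.inr (Or.inl (fam1b_of_closes h h11 hnw he hn hsw))
  have hse : a 1 (-1) = 0 := by
    simpa [he, hn, hsw, hnw] using exists_eq_zero_of_northeast_eq_zero hI h h11
  exact inFamily_transp (Or.inr (Or.inl (fam1b_of_closes h' h11 hse hn he hsw)))

/-- The closing identities force the model into one of the families. -/
lemma inFamily_of_closes {a : ℤ → ℤ → ℂ} (hI : Interesting a)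
    (h : ∀ x w y z : ℂ, Closes a x w y z) (h' : ∀ x w y z : ℂ, Closes (transp a) x w y z) :
    InFamily a := by
  rcases exists_corner_eq_zero hI h with h0 | h0 | h0 | h0
  · exact inFamily_flipY (inFamily_flipX (inFamily_of_northeast_eq_zero
      (interesting_flipX (interesting_flipY hI)) (fun x w y z => (h w x z y).flipY.flipX)
      (fun x w y z => (h' w x z y).flipX.flipY) h0))
  · exact inFamily_flipX (inFamily_of_northeast_eq_zero (interesting_flipX hI)
      (fun x w y z => (h w x y z).flipX) (fun x w y z => (h' x w z y).flipY) h0)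
  · exact inFamily_flipY (inFamily_of_northeast_eq_zero (interesting_flipY hI)
      (fun x w y z => (h x w z y).flipY) (fun x w y z => (h' w x y z).flipX) h0)
  · exact inFamily_of_northeast_eq_zero hI h h' h0

section Actions

variable {K : Type*} [Field K] [Algebra ℂ K] (a : ℤ → ℤ → ℂ)

lemma numX_div (p : K) {q : K} (hq : q ≠ 0) : numX a (p / q) 1 = numX a p q / q ^ 2 := by
  simp only [numX]; field_simp

lemma denX_div (p : K) {q : K} (hq : q ≠ 0) : denX a (p / q) 1 = denX a p q / q ^ 2 := by
  simp only [denX]; field_simp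

lemma numY_div (p : K) {q : K} (hq : q ≠ 0) : numY a (p / q) 1 = numY a p q / q ^ 2 := by
  simp only [numY]; field_simp

lemma denY_div (p : K) {q : K} (hq : q ≠ 0) : denY a (p / q) 1 = denY a p q / q ^ 2 := by
  simp only [denY]; field_simp

/-- `Φ` and `Ψ` act on the pair `(u, v)` as the two involutions attached to the model `a`. -/
structure Acts (Φ Ψ : K →ₐ[ℂ] K) (a : ℤ → ℤ → ℂ) (u v : K) : Prop where
  u_ne : u ≠ 0
  v_ne : v ≠ 0
  numX_ne : numX a v 1 ≠ 0
  denX_ne : denX a v 1 ≠ 0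
  numY_ne : numY a u 1 ≠ 0
  denY_ne : denY a u 1 ≠ 0
  fst_u : Φ u = numX a v 1 / (denX a v 1 * u)
  fst_v : Φ v = v
  snd_u : Ψ u = u
  snd_v : Ψ v = numY a u 1 / (denY a u 1 * v)

variable {a} {Φ Ψ : K →ₐ[ℂ] K} {u v : K}

lemma Acts.transp (h : Acts Φ Ψ a u v) : Acts Ψ Φ (transp a) v u :=
  ⟨h.v_ne, h.u_ne, h.numY_ne, h.denY_ne, h.numX_ne, h.denX_ne, h.snd_v, h.snd_u, h.fst_v, h.fst_u⟩

lemma Acts.flipX (h : Acts Φ Ψ a u v) : Acts Φ Ψ (flipX a) u⁻¹ v := by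
  have hu := h.u_ne
  have hN := h.numX_ne
  have hD := h.denX_ne
  have e : u⁻¹ = 1 / u := by simp
  have eN : numY (_root_.flipX a) u⁻¹ 1 = numY a u 1 / u ^ 2 := by
    rw [e, numY_div _ _ hu, numY_flipX]
  have eD : denY (_root_.flipX a) u⁻¹ 1 = denY a u 1 / u ^ 2 := by
    rw [e, denY_div _ _ hu, denY_flipX]
  have hu2 : u ^ 2 ≠ 0 := pow_ne_zero 2 hu
  refine ⟨inv_ne_zero hu, h.v_ne, ?_, ?_, ?_, ?_, ?_, h.fst_v, ?_, ?_⟩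
  · rw [numX_flipX]; exact hD
  · rw [denX_flipX]; exact hN
  · rw [eN]; exact div_ne_zero h.numY_ne hu2
  · rw [eD]; exact div_ne_zero h.denY_ne hu2
  · rw [map_inv₀, h.fst_u, numX_flipX, denX_flipX]; field_simp
  · rw [map_inv₀, h.snd_u]
  · have := h.denY_ne
    have := h.v_ne
    rw [h.snd_v, eN, eD]; field_simp

lemma Acts.flipY (h : Acts Φ Ψ a u v) : Acts Φ Ψ (flipY a) u v⁻¹ :=
  h.transp.flipX.transp

/-- If `Φ` fixes `ΨΦ u`, then the closing identity holds at `(u, v)`. -/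
lemma Acts.closes (h : Acts Φ Ψ a u v) (hc : Φ (Ψ (Φ u)) = Ψ (Φ u)) : Closes a u 1 v 1 := by
  have hu := h.u_ne
  have hv := h.v_ne
  have hN := h.numX_ne
  have hD := h.denX_ne
  have hs := h.denY_ne
  have hM : Ψ (Φ u) = numX a (numY a u 1) (denY a u 1 * v) /
      (denX a (numY a u 1) (denY a u 1 * v) * u) := by
    rw [h.fst_u, map_div₀, map_mul, map_numX, map_denX, h.snd_v, h.snd_u, map_one,
      numX_div _ _ (mul_ne_zero hs hv), denX_div _ _ (mul_ne_zero hs hv)]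
    field_simp
  have hd : denX a (numY a u 1) (denY a u 1 * v) ≠ 0 := by
    have : Ψ (denX a v 1) ≠ 0 := (map_ne_zero Ψ).2 hD
    rw [map_denX, h.snd_v, map_one, denX_div _ _ (mul_ne_zero hs hv)] at this
    exact fun h0 => this (by rw [h0, zero_div])
  have hDu := mul_ne_zero hD hu
  have hDu2 := pow_ne_zero 2 hDu
  have hd' : denX a (numY a (numX a v 1) (denX a v 1 * u))
      (denY a (numX a v 1) (denX a v 1 * u) * v) ≠ 0 := by
    have := (map_ne_zero Φ).2 hd
    rw [map_denX, map_mul, map_numY, map_denY, h.fst_v, map_one, h.fst_u,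
      numY_div _ _ hDu, denY_div _ _ hDu, div_eq_inv_mul, div_eq_inv_mul, mul_assoc,
      denX_smul] at this
    exact right_ne_zero_of_mul this
  rw [hM] at hc
  rw [map_div₀, map_mul, map_numX, map_denX, map_mul, map_numY, map_denY, h.fst_v, map_one,
    h.fst_u, numY_div _ _ hDu, denY_div _ _ hDu, div_eq_inv_mul (numY a _ _),
    div_eq_inv_mul (denY a _ _), mul_assoc, denX_smul, numX_smul] at hc
  unfold Closes
  simp only [mul_one, one_mul, one_pow, mul_comm v]
  generalize numX a (numY a (numX a v 1) (denX a v 1 * u))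
      (denY a (numX a v 1) (denX a v 1 * u) * v) = n' at *
  generalize denX a (numY a (numX a v 1) (denX a v 1 * u))
      (denY a (numX a v 1) (denX a v 1 * u) * v) = d' at *
  generalize numX a (numY a u 1) (denY a u 1 * v) = n at *
  generalize denX a (numY a u 1) (denY a u 1 * v) = d at *
  generalize numX a v 1 = N at *
  generalize denX a v 1 = D at *
  field_simp at hc
  linear_combination hc

/-- If the cube of `ΦΨ` fixes `u`, then `Φ` fixes `ΨΦ u`. -/
lemma Acts.map_comm_of_cube (h : Acts Φ Ψ a u v) (hΦ : ∀ f, Φ (Φ f) = f)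
    (hΨ : ∀ f, Ψ (Ψ f) = f) (hc : Φ (Ψ (Φ (Ψ (Φ (Ψ u))))) = u) :
    Φ (Ψ (Φ u)) = Ψ (Φ u) := by
  have h1 := congrArg (fun f => Ψ (Φ f)) hc
  simpa only [h.snd_u, hΦ, hΨ] using h1

lemma Acts.fst_fst_u (h : Acts Φ Ψ a u v) : Φ (Φ u) = u := by
  have hu := h.u_ne
  have hN := h.numX_ne
  have hD := h.denX_ne
  rw [h.fst_u, map_div₀, map_mul, map_numX, map_denX, h.fst_v, map_one, h.fst_u]
  field_simp

lemma Acts.fst_fst_v (h : Acts Φ Ψ a u v) : Φ (Φ v) = v := by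
  rw [h.fst_v, h.fst_v]

/-- The cube of `ΦΨ` fixes `u` and `v` when both involutions are monomial of hexagonal type. -/
lemma Acts.cube_of_monomial {l m : K} (h : Acts Φ Ψ a u v) (hl : l ≠ 0) (hm : m ≠ 0)
    (hΦl : Φ l = l) (hΨl : Ψ l = l) (hΦm : Φ m = m) (hΨm : Ψ m = m)
    (hΦ : Φ u = l * v / u) (hΨ : Ψ v = m * u / v) :
    Φ (Ψ (Φ (Ψ (Φ (Ψ u))))) = u ∧ Φ (Ψ (Φ (Ψ (Φ (Ψ v))))) = v := by
  have hu := h.u_ne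
  have hv := h.v_ne
  constructor
  all_goals
    simp only [h.snd_u, h.fst_v, hΦ, hΨ, map_div₀, map_mul, hΦl, hΨl, hΦm, hΨm]
    field_simp

end Actions

section Families

variable {K : Type*} [Field K] [Algebra ℂ K] {a : ℤ → ℤ → ℂ}
  {Φ Ψ : K →ₐ[ℂ] K} {u v : K}

lemma Fam1a.exists_ratios (hI : Interesting a) (hF : Fam1a a) :
    ∃ l m : ℂ, l ≠ 0 ∧ m ≠ 0 ∧ a (-1) 0 = l * a 1 (-1) ∧ a (-1) 1 = l * a 1 0 ∧
      a 0 (-1) = m * a (-1) 1 ∧ a 1 (-1) = m * a 0 1 := by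
  obtain ⟨hE, hN, hW, hS⟩ := hI
  obtain ⟨h11, hmm, h1, h2⟩ := hF
  simp only [h11, hmm, and_true, true_and, not_and] at hE hN hW hS
  have ratio : ∀ {p q r s : ℂ}, (p = 0 → q ≠ 0) → (r = 0 → s ≠ 0) → q * r = p * s →
      ∃ l : ℂ, l ≠ 0 ∧ p = l * r ∧ q = l * s := by
    intro p q r s hpq hrs h
    by_cases hr : r = 0
    · have hs := hrs hr
      have hp : p = 0 := by
        rw [hr, mul_zero] at h
        exact (mul_eq_zero.1 h.symm).resolve_right hs
      refine ⟨q / s, div_ne_zero (hpq hp) hs, by rw [hp, hr, mul_zero], ?_⟩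
      field_simp
    · refine ⟨p / r, div_ne_zero ?_ hr, ?_, ?_⟩
      · intro hp
        rw [hp, zero_mul] at h
        exact (mul_ne_zero (hpq hp) hr) h
      · field_simp
      · field_simp
        linear_combination h
  obtain ⟨l, hl, l1, l2⟩ := ratio hW hE h1
  obtain ⟨m, hm, m1, m2⟩ := ratio hS hN (by linear_combination h1 + h2)
  exact ⟨l, m, hl, hm, l1, l2, m1, m2⟩

lemma Acts.cube_of_fam1a (h : Acts Φ Ψ a u v) (hI : Interesting a) (hF : Fam1a a) :
    Φ (Ψ (Φ (Ψ (Φ (Ψ u))))) = u ∧ Φ (Ψ (Φ (Ψ (Φ (Ψ v))))) = v := by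
  obtain ⟨l, m, hl, hm, l1, l2, m1, m2⟩ := hF.exists_ratios hI
  obtain ⟨h11, hmm, -, -⟩ := hF
  have hD := h.denX_ne
  have hs := h.denY_ne
  have hu := h.u_ne
  have hv := h.v_ne
  have eN : numX a v 1 = algebraMap ℂ K l * v * denX a v 1 := by
    simp only [numX, denX, h11, hmm, l1, l2, map_mul, map_zero]; ring
  have eQ : numY a u 1 = algebraMap ℂ K m * u * denY a u 1 := by
    simp only [numY, denY, h11, hmm, m1, m2, map_mul, map_zero]; ring
  refine h.cube_of_monomial (l := algebraMap ℂ K l) (m := algebraMap ℂ K m)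
    (by simpa using hl) (by simpa using hm) (Φ.commutes l) (Ψ.commutes l) (Φ.commutes m)
    (Ψ.commutes m) ?_ ?_
  · rw [h.fst_u, eN]; field_simp
  · rw [h.snd_v, eQ]; field_simp

lemma Fam2a.exists_parameters (hI : Interesting a) (hF : Fam2a a) :
    ∃ r m s : ℂ, m ≠ 0 ∧ a 1 (-1) ≠ 0 ∧ a 0 1 ≠ 0 ∧ a 1 (-1) = m * a 0 1 ∧
      a (-1) (-1) = a 1 (-1) * r ^ 2 ∧ a 0 (-1) = 2 * r * a 1 (-1) ∧
      a (-1) 0 = a 1 (-1) * s ∧ a (-1) 1 = r * a 0 1 := by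
  obtain ⟨hE, hN, hW, hS⟩ := hI
  obtain ⟨h10, h11, h1, h2, h3⟩ := hF
  have hp : a 1 (-1) ≠ 0 := fun h => hE ⟨h, h10, h11⟩
  have hn : a 0 1 ≠ 0 := by
    intro h
    rw [h, mul_zero] at h3
    have : a (-1) 1 = 0 := by simpa [hp] using h3.symm
    exact hN ⟨this, h, h11⟩
  refine ⟨a 0 (-1) / (2 * a 1 (-1)), a 1 (-1) / a 0 1, a (-1) 0 / a 1 (-1),
    div_ne_zero hp hn, hp, hn, ?_, ?_, ?_, ?_, ?_⟩
  · field_simp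
  · field_simp
    linear_combination -h2
  · field_simp
  · field_simp
  · field_simp
    linear_combination -h3

lemma Acts.cube_of_fam2a (h : Acts Φ Ψ a u v) (hI : Interesting a) (hF : Fam2a a) :
    Φ (Ψ (Φ (Ψ (Φ (Ψ u))))) = u ∧ Φ (Ψ (Φ (Ψ (Φ (Ψ v))))) = v := by
  obtain ⟨r₀, m₀, s₀, hm₀, hp, hn, e1, e2, e3, e4, e5⟩ := hF.exists_parameters hI
  obtain ⟨h10, h11, -, -, -⟩ := hF
  have hu := h.u_ne
  have hv := h.v_ne
  have hn' : algebraMap ℂ K (a 0 1) ≠ 0 := by simpa using hn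
  obtain ⟨r, hr⟩ : ∃ r, r = algebraMap ℂ K r₀ := ⟨_, rfl⟩
  obtain ⟨m, hm⟩ : ∃ m, m = algebraMap ℂ K m₀ := ⟨_, rfl⟩
  obtain ⟨s, hs⟩ : ∃ s, s = algebraMap ℂ K s₀ := ⟨_, rfl⟩
  have hm0 : m ≠ 0 := by simpa [hm] using hm₀
  have hΦr : Φ r = r := by rw [hr, Φ.commutes]
  have hΨr : Ψ r = r := by rw [hr, Ψ.commutes]
  have hΦm : Φ m = m := by rw [hm, Φ.commutes]
  have hΨm : Ψ m = m := by rw [hm, Ψ.commutes]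
  have hΦs : Φ s = s := by rw [hs, Φ.commutes]
  have hΨs : Ψ s = s := by rw [hs, Ψ.commutes]
  have eN : numX a v 1 = (r ^ 2 + s * v + r / m * v ^ 2) * denX a v 1 := by
    simp only [numX, denX, e2, e4, e5, e1, h10, h11, map_mul, map_pow, map_zero, ← hr, ← hm, ← hs]
    field_simp; ring
  have hs0 := h.denY_ne
  have eD : denY a u 1 = (u + r) * algebraMap ℂ K (a 0 1) := by
    simp only [denY, e5, h11, map_mul, map_zero, ← hr]; ring
  have eQ : numY a u 1 = m * (u + r) ^ 2 * algebraMap ℂ K (a 0 1) := by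
    simp only [numY, e2, e3, e1, map_mul, map_pow, map_ofNat, ← hr, ← hm]; ring
  have hur : u + r ≠ 0 := by
    rw [eD] at hs0
    exact left_ne_zero_of_mul hs0
  have hD := h.denX_ne
  have hΦ : Φ u = (r ^ 2 + s * v + r / m * v ^ 2) / u := by
    rw [h.fst_u, eN]; field_simp
  have hΨ : Ψ v = m * (u + r) / v := by
    rw [h.snd_v, eQ, eD]; field_simp
  obtain ⟨u', hu'⟩ : ∃ u', u' = Φ u := ⟨_, rfl⟩
  have hu'0 : u' ≠ 0 := by rw [hu']; exact (map_ne_zero Φ).2 hu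
  have hu'r : u' + r ≠ 0 := by
    have := (map_ne_zero Φ).2 hur
    rwa [map_add, hΦr, ← hu'] at this
  have hrel : u' * u = r ^ 2 + s * v + r / m * v ^ 2 := by rw [hu', hΦ]; field_simp
  have hTv : Φ (Ψ v) = m * (u' + r) / v := by
    rw [hΨ, map_div₀, map_mul, map_add, hΦr, hΦm, ← hu', h.fst_v]
  have hTu : Φ (Ψ u) = u' := by rw [h.snd_u, hu']
  have hTu' : Φ (Ψ u') =
      (r ^ 2 + s * (m * (u' + r) / v) + r / m * (m * (u' + r) / v) ^ 2) / u' := by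
    rw [hu', hΦ]
    simp only [map_div₀, map_add, map_mul, map_pow, hTu, hTv, hΦr, hΨr, hΦm, hΨm, hΦs, hΨs]
    rw [hu', ← hΦ]
  obtain ⟨u'', hu''⟩ : ∃ u'', u'' = Φ (Ψ u') := ⟨_, rfl⟩
  have hP'' : u'' = (r ^ 2 + s * (m * (u + r) / v) + r / m * (m * (u + r) / v) ^ 2) / u := by
    rw [hu'', hTu']
    field_simp
    field_simp at hrel
    linear_combination r * (u' - u) * hrel
  have hu''r : u'' + r = (u + r) * (u' + r) * m / v ^ 2 := by
    rw [hP'']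
    field_simp
    field_simp at hrel
    linear_combination -(u + r) * hrel
  have hTu'' : Φ (Ψ u'') = u := by
    rw [hP'']
    simp only [map_div₀, map_add, map_mul, map_pow, hTu, hTv, hΦr, hΨr, hΦm, hΨm, hΦs, hΨs]
    field_simp
    field_simp at hrel
    linear_combination -hrel
  have hTTv : Φ (Ψ (Φ (Ψ v))) = m * (u + r) / v := by
    rw [hTv]
    simp only [map_div₀, map_add, map_mul, hTv, hΦr, hΨr, hΦm, hΨm, ← hu'', hu''r]
    field_simp
  refine ⟨by rw [hTu, ← hu'', hTu''], ?_⟩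
  rw [hTTv]
  simp only [map_div₀, map_add, map_mul, hTv, hTu, hΦr, hΨr, hΦm, hΨm]
  field_simp

end Families

section RationalFunctions

lemma rf_algHom_ext {f g : RF →ₐ[ℂ] RF} (hx : f Xr = g Xr) (hy : f Yr = g Yr) : f = g := by
  apply IsLocalization.algHom_ext (nonZeroDivisors (MvPolynomial (Fin 2) ℂ))
  apply MvPolynomial.algHom_ext
  intro i
  fin_cases i
  · exact hx
  · exact hy

/-- The inclusion of polynomials into rational functions. -/
def polyToRF : MvPolynomial (Fin 2) ℂ →ₐ[ℂ] RF :=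
  IsScalarTower.toAlgHom ℂ (MvPolynomial (Fin 2) ℂ) RF

lemma polyToRF_injective : Function.Injective polyToRF :=
  IsFractionRing.injective (MvPolynomial (Fin 2) ℂ) RF

lemma polyToRF_X_zero : polyToRF (MvPolynomial.X 0) = Xr := rfl

lemma polyToRF_X_one : polyToRF (MvPolynomial.X 1) = Yr := rfl

lemma quadratic_Xi_ne_zero {A B C : ℂ} (i : Fin 2) (h : ¬(A = 0 ∧ B = 0 ∧ C = 0)) :
    algebraMap ℂ RF A * 1 ^ 2 + algebraMap ℂ RF B * (polyToRF (MvPolynomial.X i) * 1) +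
      algebraMap ℂ RF C * polyToRF (MvPolynomial.X i) ^ 2 ≠ 0 := by
  intro h0
  apply h
  apply quadratic_eq_zero
  intro t
  have h1 : polyToRF (algebraMap ℂ _ A * 1 ^ 2 + algebraMap ℂ _ B * (MvPolynomial.X i * 1) +
      algebraMap ℂ _ C * MvPolynomial.X i ^ 2) = polyToRF 0 := by
    simpa only [map_add, map_mul, map_pow, map_one, map_zero, AlgHom.commutes] using h0
  have h2 := congrArg (MvPolynomial.aeval fun _ => t) (polyToRF_injective h1)
  simpa using h2

lemma forall_closes {a : ℤ → ℤ → ℂ} (i j : Fin 2) (hij : i ≠ j)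
    (h : Closes a (polyToRF (MvPolynomial.X i)) 1 (polyToRF (MvPolynomial.X j)) 1)
    (x w y z : ℂ) : Closes a x w y z := by
  have h1 : Closes a (MvPolynomial.X i : MvPolynomial (Fin 2) ℂ) 1 (MvPolynomial.X j) 1 := by
    apply Closes.of_map polyToRF polyToRF_injective
    simpa only [map_one] using h
  have h2 : ∀ x y : ℂ, Closes a x 1 y 1 := by
    intro x y
    have := h1.map (MvPolynomial.aeval fun k => if k = i then x else y)
    simpa [hij.symm] using this
  have h3 : ∀ x w y z : ℂ, w ≠ 0 → z ≠ 0 → Closes a x w y z := by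
    intro x w y z hw hz
    have := (h2 (x / w) (y / z)).smul w z
    rwa [mul_div_cancel₀ _ hw, mul_div_cancel₀ _ hz, mul_one, mul_one] at this
  have h4 : ∀ x w y z : ℂ, z ≠ 0 → Closes a x w y z := by
    intro x w y z hz
    unfold Closes
    rw [← sub_eq_zero]
    revert w
    refine eq_zero_of_monomial_mul (c := 1) (k := 1) one_ne_zero ?_ ?_
    · unfold numX denX numY denY
      fun_prop
    · intro w
      rcases eq_or_ne w 0 with rfl | hw
      · simp
      · rw [sub_eq_zero.2 (h3 x w y z hw hz), mul_zero]
  unfold Closes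
  rw [← sub_eq_zero]
  revert z
  refine eq_zero_of_monomial_mul (c := 1) (k := 1) one_ne_zero ?_ ?_
  · unfold numX denX numY denY
    fun_prop
  · intro z
    rcases eq_or_ne z 0 with rfl | hz
    · simp
    · rw [sub_eq_zero.2 (h4 x w y z hz), mul_zero]

variable {a : ℤ → ℤ → ℂ} {Φ Ψ : RF →ₐ[ℂ] RF}

lemma acts_Xr_Yr (hI : Interesting a)
    (hΦx : Φ Xr = Xr⁻¹ *
      ((Cr (a (-1) (-1)) * Yr⁻¹ + Cr (a (-1) 0) + Cr (a (-1) 1) * Yr) /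
        (Cr (a 1 (-1)) * Yr⁻¹ + Cr (a 1 0) + Cr (a 1 1) * Yr)))
    (hΦy : Φ Yr = Yr) (hΨx : Ψ Xr = Xr)
    (hΨy : Ψ Yr = Yr⁻¹ *
      ((Cr (a (-1) (-1)) * Xr⁻¹ + Cr (a 0 (-1)) + Cr (a 1 (-1)) * Xr) /
        (Cr (a (-1) 1) * Xr⁻¹ + Cr (a 0 1) + Cr (a 1 1) * Xr))) :
    Acts Φ Ψ a Xr Yr := by
  have hX := Xr_ne_zero
  have hY := Yr_ne_zero
  have key : ∀ {t c₀ c₁ c₂ : RF}, t ≠ 0 →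
      c₀ * t⁻¹ + c₁ + c₂ * t = (c₀ * 1 ^ 2 + c₁ * (t * 1) + c₂ * t ^ 2) / t := by
    intro t c₀ c₁ c₂ ht
    field_simp
  obtain ⟨hE, hN, hW, hS⟩ := hI
  refine ⟨hX, hY, quadratic_Xi_ne_zero 1 hW, quadratic_Xi_ne_zero 1 hE,
    quadratic_Xi_ne_zero 0 hS, quadratic_Xi_ne_zero 0 hN, ?_, hΦy, hΨx, ?_⟩
  · rw [hΦx, key hY, key hY, div_div_div_cancel_right₀ hY, inv_mul_eq_div, div_div]
    rfl
  · rw [hΨy, key hX, key hX, div_div_div_cancel_right₀ hX, inv_mul_eq_div, div_div]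
    rfl

lemma Acts.involutive (h : Acts Φ Ψ a Xr Yr) : ∀ f, Φ (Φ f) = f := by
  have : Φ.comp Φ = AlgHom.id ℂ RF := rf_algHom_ext h.fst_fst_u h.fst_fst_v
  exact fun f => DFunLike.congr_fun this f

lemma Acts.involutive_snd (h : Acts Φ Ψ a Xr Yr) : ∀ f, Ψ (Ψ f) = f := by
  have : Ψ.comp Ψ = AlgHom.id ℂ RF := rf_algHom_ext h.transp.fst_fst_v h.transp.fst_fst_u
  exact fun f => DFunLike.congr_fun this f

lemma cube_swap {K : Type*} [Field K] [Algebra ℂ K] {Φ Ψ : K →ₐ[ℂ] K}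
    (h : ∀ f, Φ (Ψ (Φ (Ψ (Φ (Ψ f))))) = f) (f : K) : Ψ (Φ (Ψ (Φ (Ψ (Φ f))))) = f :=
  Φ.toRingHom.injective (h (Φ f))

lemma Acts.inFamily (h : Acts Φ Ψ a Xr Yr) (hI : Interesting a)
    (hc : ∀ f, Φ (Ψ (Φ (Ψ (Φ (Ψ f))))) = f) : InFamily a :=
  inFamily_of_closes hI
    (forall_closes 0 1 (by decide)
      (h.closes (h.map_comm_of_cube h.involutive h.involutive_snd (hc _))))
    (forall_closes 1 0 (by decide)
      (h.transp.closes
        (h.transp.map_comm_of_cube h.involutive_snd h.involutive (cube_swap hc _))))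

lemma Acts.cube_of_reflection {K : Type*} [Field K] [Algebra ℂ K] {Φ Ψ : K →ₐ[ℂ] K} {u v : K}
    (h : Acts Φ Ψ a u v) (hI : Interesting a)
    (hF : ∃ c ∈ ({a, _root_.flipX a, _root_.flipY a, _root_.flipX (_root_.flipY a)} :
      Set (ℤ → ℤ → ℂ)), Fam1a c ∨ Fam2a c) :
    Φ (Ψ (Φ (Ψ (Φ (Ψ u))))) = u ∧ Φ (Ψ (Φ (Ψ (Φ (Ψ v))))) = v := by
  have cube : ∀ {c : ℤ → ℤ → ℂ} {u v : K}, Acts Φ Ψ c u v → Interesting c →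
      (Fam1a c ∨ Fam2a c) →
      Φ (Ψ (Φ (Ψ (Φ (Ψ u))))) = u ∧ Φ (Ψ (Φ (Ψ (Φ (Ψ v))))) = v := by
    rintro c u v h hI (hF | hF)
    · exact h.cube_of_fam1a hI hF
    · exact h.cube_of_fam2a hI hF
  obtain ⟨c, rfl | rfl | rfl | rfl, hF⟩ := hF
  · exact cube h hI hF
  · simpa using cube h.flipX (interesting_flipX hI) hF
  · simpa using cube h.flipY (interesting_flipY hI) hF
  · simpa using cube h.flipY.flipX (interesting_flipX (interesting_flipY hI)) hF

lemma Acts.cube_of_inFamily (h : Acts Φ Ψ a Xr Yr) (hI : Interesting a) (hF : InFamily a) :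
    ∀ f, Φ (Ψ (Φ (Ψ (Φ (Ψ f))))) = f := by
  have ext : ∀ {Φ Ψ : RF →ₐ[ℂ] RF}, Φ (Ψ (Φ (Ψ (Φ (Ψ Xr))))) = Xr →
      Φ (Ψ (Φ (Ψ (Φ (Ψ Yr))))) = Yr → ∀ f, Φ (Ψ (Φ (Ψ (Φ (Ψ f))))) = f := by
    intro Φ Ψ hx hy
    have : (Φ.comp Ψ).comp ((Φ.comp Ψ).comp (Φ.comp Ψ)) = AlgHom.id ℂ RF := rf_algHom_ext hx hy
    exact fun f => DFunLike.congr_fun this f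
  obtain ⟨b, rfl | rfl, hc⟩ := (inFamily_iff a).1 hF
  · obtain ⟨hx, hy⟩ := h.cube_of_reflection hI hc
    exact ext hx hy
  · obtain ⟨hy, hx⟩ := h.transp.cube_of_reflection (interesting_transp hI) hc
    exact cube_swap (ext hx hy)

end RationalFunctions

theorem statement6 (a : ℤ → ℤ → ℂ) (hInt : Interesting a)
    (Φ Ψ : RF →ₐ[ℂ] RF)
    (hΦx : Φ Xr = Xr⁻¹ *
      ((Cr (a (-1) (-1)) * Yr⁻¹ + Cr (a (-1) 0) + Cr (a (-1) 1) * Yr) /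
        (Cr (a 1 (-1)) * Yr⁻¹ + Cr (a 1 0) + Cr (a 1 1) * Yr)))
    (hΦy : Φ Yr = Yr)
    (hΨx : Ψ Xr = Xr)
    (hΨy : Ψ Yr = Yr⁻¹ *
      ((Cr (a (-1) (-1)) * Xr⁻¹ + Cr (a 0 (-1)) + Cr (a 1 (-1)) * Xr) /
        (Cr (a (-1) 1) * Xr⁻¹ + Cr (a 0 1) + Cr (a 1 1) * Xr))) :
    (Φ.comp Ψ).comp ((Φ.comp Ψ).comp (Φ.comp Ψ)) = AlgHom.id ℂ RF ↔
      (Fam1a a ∨ Fam1b a ∨ Fam2a a ∨ Fam2b a ∨ Fam3a a ∨ Fam3b a ∨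
       Fam1a (fun u v => a v u) ∨ Fam1b (fun u v => a v u) ∨
       Fam2a (fun u v => a v u) ∨ Fam2b (fun u v => a v u) ∨
       Fam3a (fun u v => a v u) ∨ Fam3b (fun u v => a v u)) := by
  have h := acts_Xr_Yr hInt hΦx hΦy hΨx hΨy
  refine ⟨fun hc => h.inFamily hInt fun f => DFunLike.congr_fun hc f, fun hF => ?_⟩
  exact AlgHom.ext (h.cube_of_inFamily hInt hF)

end
end

section
/- Let (a_{u,v}) be a model of family 1b with all six relevant multiplicities nonzero: a_{1,-1}=a_{-1,1}=0, a_{-1,0}a_{1,0}=a_{-1,-1}a_{1,1}=a_{0,-1}a_{0,1}, and a_{1,1}, a_{-1,-1}, a_{1,0}, a_{-1,0}, a_{0,1}, a_{0,-1} all nonzero. Put λ = a_{0,1}a_{1,0}²/(a_{0,-1}a_{1,1}²), and let (f^λ_{i,j,n}) be the counting array of the model M_λ with a_{-1,-1}=a_{-1,0}=a_{0,-1}=1, a_{1,1}=a_{1,0}=a_{0,1}=λ, and a_{1,-1}=a_{-1,1}=0. Then for all i,j,n ≥ 0: f_{i,j,n} = (a_{1,1}/a_{0,1})^i · (a_{1,1}/a_{1,0})^j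 · (a_{-1,-1}a_{1,1}²/(a_{0,1}a_{1,0}))^n · f^λ_{i,j,n}. -/
/- STATEMENT 10: A model of family 1b with all six relevant multiplicities nonzero
reduces by an algebraic substitution to the one-parameter model M_λ with
a_{-1,-1}=a_{-1,0}=a_{0,-1}=1 and a_{1,1}=a_{1,0}=a_{0,1}=λ. -/

noncomputable section

/-- The counting array (f_{i,j,n}) of a quarter-plane model with multiplicities `a`. -/
def IsCountingArray (a : ℤ → ℤ → ℂ) (f : ℤ → ℤ → ℕ → ℂ) : Prop :=
  f 0 0 0 = 1 ∧
  (∀ i j : ℤ, ¬(i = 0 ∧ j = 0) → f i j 0 = 0) ∧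
  (∀ (i j : ℤ) (n : ℕ), i < 0 ∨ j < 0 → f i j n = 0) ∧
  (∀ (i j : ℤ) (n : ℕ), 0 ≤ i → 0 ≤ j →
    f i j (n + 1) =
      a (-1) (-1) * f (i + 1) (j + 1) n + a (-1) 0 * f (i + 1) j n +
      a (-1) 1 * f (i + 1) (j - 1) n + a 0 (-1) * f i (j + 1) n +
      a 0 1 * f i (j - 1) n + a 1 (-1) * f (i - 1) (j + 1) n +
      a 1 0 * f (i - 1) j n + a 1 1 * f (i - 1) (j - 1) n)

/-- The model M_λ: steps ↙, ←, ↓ with multiplicity 1 and ↗, →, ↑ with multiplicity λ. -/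
def Mmodel (l : ℂ) : ℤ → ℤ → ℂ := fun u v =>
  if (u = -1 ∧ v = -1) ∨ (u = -1 ∧ v = 0) ∨ (u = 0 ∧ v = -1) then 1
  else if (u = 1 ∧ v = 1) ∨ (u = 1 ∧ v = 0) ∨ (u = 0 ∧ v = 1) then l
  else 0

/-- If the multiplicities of two models are related by `a u v = t * x ^ u * y ^ v * b u v`,
their counting arrays are related by a monomial substitution. -/
lemma IsCountingArray.eq_zpow_mul {a b : ℤ → ℤ → ℂ} {F G : ℤ → ℤ → ℕ → ℂ}
    (hF : IsCountingArray a F) (hG : IsCountingArray b G) {x y t : ℂ}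
    (hx : x ≠ 0) (hy : y ≠ 0)
    (hab : ∀ u ∈ Set.Icc (-1 : ℤ) 1, ∀ v ∈ Set.Icc (-1 : ℤ) 1, (u, v) ≠ (0, 0) →
      a u v = t * x ^ u * y ^ v * b u v) (i j : ℤ) (n : ℕ) :
    F i j n = x ^ i * y ^ j * t ^ n * G i j n := by
  obtain ⟨hF0, hFz, hFneg, hFs⟩ := hF
  obtain ⟨hG0, hGz, hGneg, hGs⟩ := hG
  induction n generalizing i j with
  | zero =>
    by_cases h : i = 0 ∧ j = 0
    · obtain ⟨rfl, rfl⟩ := h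
      simp [hF0, hG0]
    · rw [hFz i j h, hGz i j h, mul_zero]
  | succ n ih =>
    by_cases h : i < 0 ∨ j < 0
    · rw [hFneg i j _ h, hGneg i j _ h, mul_zero]
    · push Not at h
      rw [hFs i j n h.1 h.2, hGs i j n h.1 h.2]
      simp only [ih]
      rw [hab (-1) (by simp) (-1) (by simp) (by simp), hab (-1) (by simp) 0 (by simp) (by simp),
        hab (-1) (by simp) 1 (by simp) (by simp), hab 0 (by simp) (-1) (by simp) (by simp),
        hab 0 (by simp) 1 (by simp) (by simp), hab 1 (by simp) (-1) (by simp) (by simp),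
        hab 1 (by simp) 0 (by simp) (by simp), hab 1 (by simp) 1 (by simp) (by simp)]
      simp only [zpow_add₀ hx, zpow_add₀ hy, zpow_sub₀ hx, zpow_sub₀ hy, zpow_neg, zpow_one,
        zpow_zero]
      field_simp
      ring

theorem statement10 (a : ℤ → ℤ → ℂ)
    (hz1 : a 1 (-1) = 0) (hz2 : a (-1) 1 = 0)
    (he1 : a (-1) 0 * a 1 0 = a (-1) (-1) * a 1 1)
    (he2 : a (-1) (-1) * a 1 1 = a 0 (-1) * a 0 1)
    (hn1 : a 1 1 ≠ 0) (hn2 : a (-1) (-1) ≠ 0) (hn3 : a 1 0 ≠ 0)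
    (hn4 : a (-1) 0 ≠ 0) (hn5 : a 0 1 ≠ 0) (hn6 : a 0 (-1) ≠ 0)
    (F G : ℤ → ℤ → ℕ → ℂ)
    (hF : IsCountingArray a F)
    (hG : IsCountingArray (Mmodel (a 0 1 * a 1 0 ^ 2 / (a 0 (-1) * a 1 1 ^ 2))) G) :
    ∀ i j n : ℕ,
      F i j n = (a 1 1 / a 0 1) ^ i * (a 1 1 / a 1 0) ^ j *
        (a (-1) (-1) * a 1 1 ^ 2 / (a 0 1 * a 1 0)) ^ n * G i j n := by
  intro i j n
  have key := hF.eq_zpow_mul hG (x := a 1 1 / a 0 1) (y := a 1 1 / a 1 0)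
    (t := a (-1) (-1) * a 1 1 ^ 2 / (a 0 1 * a 1 0)) (div_ne_zero hn1 hn5)
    (div_ne_zero hn1 hn3) ?_ i j n
  · simpa only [zpow_natCast] using key
  · rintro u ⟨hu, hu'⟩ v ⟨hv, hv'⟩ huv
    interval_cases u <;> interval_cases v <;> simp [Mmodel, hz1, hz2] at huv ⊢ <;>
      field_simp <;> grind

end
end

section
/- Let (a_{u,v}) be a model of family 4b, i.e., a_{1,-1}=a_{0,1}=a_{0,-1}=a_{-1,1}=0 and a_{1,1}a_{-1,-1}=a_{1,0}a_{-1,0}, with a_{1,0}, a_{-1,0}, a_{1,1}, a_{-1,-1} all nonzero, and let (g_{i,j,n}) be the counting array of the Gessel model (the model with a_{1,0}=a_{-1,0}=a_{1,1}=a_{-1,-1}=1 and all other multiplicities 0). Then for any s, r ∈ ℂ with s·r = a_{1,0} and r = s·a_{-1,0} (such pairs exist: take r² = a_{1,0}a_{-1,0}), one has f_{i,j,n} = s^i · (a_{1,1}/a_{1,0})^j · r^n · g_{i,j,n} for all i,j,n ≥ 0; equivalently f(x,y,t) = g(s·x, (a_{1,1}/a_{1,0})·y, r·t). -/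
/- STATEMENT 18: A model of family 4b with the four multiplicities nonzero reduces to
the Gessel model via f_{i,j,n} = s^i (a_{1,1}/a_{1,0})^j r^n g_{i,j,n}, for any s, r
with s·r = a_{1,0} and r = s·a_{-1,0}. -/

noncomputable section

/-- The Gessel model: steps →, ←, ↗, ↙ with multiplicity 1. -/
def gesselModel : ℤ → ℤ → ℂ := fun u v =>
  if (u = 1 ∧ v = 0) ∨ (u = -1 ∧ v = 0) ∨ (u = 1 ∧ v = 1) ∨ (u = -1 ∧ v = -1) then 1
  else 0

/-- If the step `(u, v)` of a model has multiplicity `r * s ^ u * q ^ v` for every Gessel step and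
zero otherwise, then its counting array is the Gessel one rescaled by `s`, `q` and `r`. -/
theorem IsCountingArray.eq_zpow_mul_gessel {a : ℤ → ℤ → ℂ} {F G : ℤ → ℤ → ℕ → ℂ}
    (hF : IsCountingArray a F) (hG : IsCountingArray gesselModel G)
    (hz1 : a 1 (-1) = 0) (hz2 : a 0 1 = 0) (hz3 : a 0 (-1) = 0) (hz4 : a (-1) 1 = 0)
    {s q r : ℂ} (hs : s ≠ 0) (hq : q ≠ 0)
    (h1 : a (-1) (-1) * (s * q) = r) (h2 : a (-1) 0 * s = r)
    (h3 : a 1 0 = r * s) (h4 : a 1 1 = r * (s * q)) (n : ℕ) :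
    ∀ i j : ℤ, F i j n = s ^ i * q ^ j * r ^ n * G i j n := by
  obtain ⟨hF0, hFz, hFneg, hFrec⟩ := hF
  obtain ⟨hG0, hGz, hGneg, hGrec⟩ := hG
  induction n with
  | zero =>
    intro i j
    by_cases h : i = 0 ∧ j = 0
    · obtain ⟨rfl, rfl⟩ := h
      simp [hF0, hG0]
    · simp [hFz i j h, hGz i j h]
  | succ n ih =>
    intro i j
    by_cases h : i < 0 ∨ j < 0
    · simp [hFneg i j _ h, hGneg i j _ h]
    · push Not at h
      rw [hFrec i j n h.1 h.2, hGrec i j n h.1 h.2, hz1, hz2, hz3, hz4, h3, h4]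
      simp only [ih, gesselModel, zpow_add₀ hs, zpow_add₀ hq, zpow_sub₀ hs, zpow_sub₀ hq,
        zpow_one]
      norm_num
      field_simp
      linear_combination
        (r ^ n * G (i + 1) (j + 1) n) * h1 + (r ^ n * G (i + 1) j n) * h2

theorem statement18 (a : ℤ → ℤ → ℂ)
    (hz1 : a 1 (-1) = 0) (hz2 : a 0 1 = 0) (hz3 : a 0 (-1) = 0) (hz4 : a (-1) 1 = 0)
    (he : a 1 1 * a (-1) (-1) = a 1 0 * a (-1) 0)
    (hn1 : a 1 0 ≠ 0) (hn2 : a (-1) 0 ≠ 0) (hn3 : a 1 1 ≠ 0) (hn4 : a (-1) (-1) ≠ 0)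
    (F G : ℤ → ℤ → ℕ → ℂ)
    (hF : IsCountingArray a F) (hG : IsCountingArray gesselModel G) :
    (∃ s r : ℂ, s * r = a 1 0 ∧ r = s * a (-1) 0) ∧
    ∀ s r : ℂ, s * r = a 1 0 → r = s * a (-1) 0 →
      ∀ i j n : ℕ, F i j n = s ^ i * (a 1 1 / a 1 0) ^ j * r ^ n * G i j n := by
  constructor
  · obtain ⟨s, hs⟩ := IsAlgClosed.exists_pow_nat_eq (a 1 0 / a (-1) 0) (n := 2) two_pos
    refine ⟨s, s * a (-1) 0, ?_, rfl⟩
    rw [← mul_assoc, ← sq, hs, div_mul_cancel₀ _ hn2]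
  · intro s r hsr hr i j n
    have hs : s ≠ 0 := by
      rintro rfl
      exact hn1 (by rw [← hsr, zero_mul])
    have h1 : a (-1) (-1) * (s * (a 1 1 / a 1 0)) = r := by
      rw [hr]
      field_simp
      linear_combination he
    have h4 : a 1 1 = r * (s * (a 1 1 / a 1 0)) := by
      field_simp
      linear_combination -hsr
    simpa only [zpow_natCast] using hF.eq_zpow_mul_gessel hG hz1 hz2 hz3 hz4 hs
      (div_ne_zero hn3 hn1) h1 (by rw [hr, mul_comm]) (by rw [← hsr, mul_comm]) h4 n i j

end
end
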